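/- arXiv:1604.00941 — 5 statements merged into one kernel-verified Lean document; each statement's English description precedes it below -/
import Mathlib

section
/- Let a, b ∈ ℝ and let u, v : ℍ → ℂ be holomorphic functions such that for all τ ∈ ℍ one has u(τ) − v(τ) = aτ − b and u(τ), v(τ) ∉ ℤτ + ℤ. Define M̂_{a,b}(τ) := −√2 · e(a(b+1/2)) · e^{−πia²τ} · μ̂(u(τ), v(τ); τ). Then for all τ = x + iy ∈ ℍ one has ξ_{1/2}(M̂_{a,b})(τ) = conj( g_{a+1/2, b+1/2}(−conj(τ)) ), where ξ_{1/2}(f)(τ) := 2i·y^{1/2}·conj( (1/2)(∂f/∂x + i·∂f/∂y)(τ) ) is the weight-1/2 xi-operator (expressed via the Wirtinger derivative ∂/∂τ̄ = (1/2)(∂/∂x + i∂/∂y)). -/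
open Complex

/-- Zwegers' Jacobi theta function
`ϑ(v;τ) = ∑_{n∈ℤ} e^{2πi(n+1/2)(v+1/2)} e^{πiτ(n+1/2)²}`. -/
noncomputable def jacobiThetaZw (v τ : ℂ) : ℂ :=
  ∑' n : ℤ, Complex.exp (2 * (Real.pi : ℂ) * I * ((n : ℂ) + 1/2) * (v + 1/2)) *
    Complex.exp ((Real.pi : ℂ) * I * τ * ((n : ℂ) + 1/2) ^ 2)

/-- Zwegers' μ-function
`μ(u,v;τ) = (e^{πiu}/ϑ(v;τ)) ∑_{n∈ℤ} (−1)ⁿ e^{2πinv} e^{πiτn(n+1)}/(1 − e^{2πiu}e^{2πinτ})`. -/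
noncomputable def muZw (u v τ : ℂ) : ℂ :=
  Complex.exp ((Real.pi : ℂ) * I * u) / jacobiThetaZw v τ *
    ∑' n : ℤ, (-1 : ℂ) ^ n * Complex.exp (2 * (Real.pi : ℂ) * I * (n : ℂ) * v) *
      Complex.exp ((Real.pi : ℂ) * I * τ * (n : ℂ) * ((n : ℂ) + 1)) /
      (1 - Complex.exp (2 * (Real.pi : ℂ) * I * u) * Complex.exp (2 * (Real.pi : ℂ) * I * (n : ℂ) * τ))

/-- Zwegers' nonholomorphic completion term `R(u;τ)`, indexed by `ν = n + 1/2`, `n ∈ ℤ`. -/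
noncomputable def Rzw (u τ : ℂ) : ℂ :=
  ∑' n : ℤ,
    (((Real.sign ((n : ℝ) + 1/2) -
        2 * ∫ t in (0:ℝ)..(((n : ℝ) + 1/2 + u.im / τ.im) * Real.sqrt (2 * τ.im)),
          Real.exp (-Real.pi * t ^ 2)) : ℝ) : ℂ) *
      (-1 : ℂ) ^ n *
      Complex.exp (-(Real.pi : ℂ) * I * ((n : ℂ) + 1/2) ^ 2 * τ -
        2 * (Real.pi : ℂ) * I * ((n : ℂ) + 1/2) * u)

/-- The completed μ-function `μ̂(u,v;τ) = μ(u,v;τ) + (i/2)R(u−v;τ)`. -/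
noncomputable def muHat (u v τ : ℂ) : ℂ := muZw u v τ + I/2 * Rzw (u - v) τ

/-- Zwegers' unary theta function
`g_{a,b}(τ) = ∑_{n∈ℤ} (n+a) e^{2πib(n+a)} e^{πiτ(n+a)²}`. -/
noncomputable def gUnary (a b : ℝ) (τ : ℂ) : ℂ :=
  ∑' n : ℤ, ((n : ℂ) + a) * Complex.exp (2 * (Real.pi : ℂ) * I * b * ((n : ℂ) + a)) *
    Complex.exp ((Real.pi : ℂ) * I * τ * ((n : ℂ) + a) ^ 2)

/-- `M̂_{a,b}(τ) = −√2 e(a(b+1/2)) e^{−πia²τ} μ̂(u(τ), v(τ); τ)`. -/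
noncomputable def MHat (a b : ℝ) (u v : ℂ → ℂ) (σ : ℂ) : ℂ :=
  -(Real.sqrt 2 : ℂ) * Complex.exp (2 * (Real.pi : ℂ) * I * ((a : ℂ) * ((b : ℂ) + 1/2))) *
    Complex.exp (-(Real.pi : ℂ) * I * (a : ℂ) ^ 2 * σ) * muHat (u σ) (v σ) σ

/-!
The function `μ(u, v; τ)` is holomorphic along holomorphic `u`, `v` avoiding the lattice, because
by the triple product `ϑ(v; τ)` vanishes only for `v ∈ ℤτ + ℤ`; so `∂/∂τ̄` sees only the completion
`R(u - v; τ) = R(aτ - b; τ)`. There `α = a` is constant, and completing the square against the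
factor `e^{-πia²τ}` turns the summands into a constant times
`(sgn(n + 1/2) - E(m √(2y))) e^{-πim²τ}` with `m = n + 1/2 + a` and `E(x) = 2 ∫₀ˣ e^{-πt²} dt`.
Since `e^{-2πm²y} e^{-πim²τ} = e^{-πim²τ̄}`, the `∂/∂τ̄`-derivative of such a summand is `y^{-1/2}`
times a constant multiple of `m e^{πim²(-τ̄)}`, a summand of the unary theta function at `-τ̄`.
-/

open Filter Topology MeasureTheory
open scoped Real ComplexConjugate

section TripleProduct

/-- The `q`-Pochhammer symbol `(Q; Q)_m`. -/
def qPochhammer {R : Type*} [CommRing R] (Q : R) (m : ℕ) : R :=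
  ∏ k ∈ Finset.range m, (1 - Q ^ (k + 1))

/-- `1 / (Q; Q)_m` for an integer index `m`, with the usual convention that it vanishes for
`m < 0`; this makes the recursion `invQPochhammer_sub_one` hold without exception. -/
def invQPochhammer {K : Type*} [Field K] (Q : K) (m : ℤ) : K :=
  if m < 0 then 0 else (qPochhammer Q m.toNat)⁻¹

/-- The `q`-binomial coefficient `[2N choose N + n]_Q`, which vanishes for `|n| > N`. -/
def centralQBinomial {K : Type*} [Field K] (Q : K) (N : ℕ) (n : ℤ) : K :=
  qPochhammer Q (2 * N) * invQPochhammer Q (N + n) * invQPochhammer Q (N - n)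

section Field

variable {K : Type*} [Field K] {Q q w : K}

lemma qPochhammer_ne_zero (hQ : ∀ k : ℕ, Q ^ (k + 1) ≠ 1) (m : ℕ) : qPochhammer Q m ≠ 0 :=
  Finset.prod_ne_zero_iff.mpr fun k _ => sub_ne_zero.mpr (hQ k).symm

lemma invQPochhammer_sub_one (hQ : ∀ k : ℕ, Q ^ (k + 1) ≠ 1) (m : ℤ) :
    invQPochhammer Q (m - 1) = (1 - Q ^ m) * invQPochhammer Q m := by
  obtain hm | rfl | hm := lt_trichotomy m 0
  · simp [invQPochhammer, hm, show m - 1 < 0 by lia]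
  · simp [invQPochhammer]
  · obtain ⟨k, rfl⟩ : ∃ k : ℕ, m = (k + 1 : ℕ) := ⟨(m - 1).toNat, by lia⟩
    have hk : ((k + 1 : ℕ) : ℤ) - 1 = k := by lia
    have hsucc : qPochhammer Q (k + 1) = qPochhammer Q k * (1 - Q ^ (k + 1)) :=
      Finset.prod_range_succ _ _
    have hne : 1 - Q ^ (k + 1) ≠ 0 := sub_ne_zero.mpr (hQ k).symm
    have hP := qPochhammer_ne_zero hQ k
    simp only [invQPochhammer, hk, Int.natCast_nonneg, not_lt.mpr, if_false, Int.toNat_natCast,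
      hsucc, zpow_natCast]
    field_simp

lemma centralQBinomial_zero_left (n : ℤ) :
    centralQBinomial Q 0 n = if n = 0 then 1 else 0 := by
  obtain hn | rfl | hn := lt_trichotomy n 0
  · simp [centralQBinomial, invQPochhammer, hn, hn.ne]
  · simp [centralQBinomial, invQPochhammer, qPochhammer]
  · simp [centralQBinomial, invQPochhammer, hn, hn.ne']

lemma centralQBinomial_succ_left (hQ : ∀ k : ℕ, Q ^ (k + 1) ≠ 1) (hQ0 : Q ≠ 0) (N : ℕ) (n : ℤ) :
    centralQBinomial Q (N + 1) n =
      (1 + Q ^ (2 * N + 1)) * centralQBinomial Q N n +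
        Q ^ ((N : ℤ) + 1 - n) * centralQBinomial Q N (n - 1) +
        Q ^ ((N : ℤ) + 1 + n) * centralQBinomial Q N (n + 1) := by
  have hP : qPochhammer Q (2 * (N + 1)) =
      qPochhammer Q (2 * N) * (1 - Q ^ (2 * N + 1)) * (1 - Q ^ (2 * N + 2)) := by
    simp only [qPochhammer, show 2 * (N + 1) = 2 * N + 1 + 1 by ring, Finset.prod_range_succ]
  have hdown (m : ℤ) : invQPochhammer Q m = (1 - Q ^ (m + 1)) * invQPochhammer Q (m + 1) := by
    rw [← invQPochhammer_sub_one hQ, add_sub_cancel_right]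
  have hdown₂ (m : ℤ) : invQPochhammer Q (m - 1) =
      (1 - Q ^ (m + 1) / Q) * ((1 - Q ^ (m + 1)) * invQPochhammer Q (m + 1)) := by
    rw [← hdown, invQPochhammer_sub_one hQ, zpow_add_one₀ hQ0, mul_div_cancel_right₀ _ hQ0]
  have hpow : Q ^ (2 * N + 2) = Q ^ ((N : ℤ) + 1 + n) * Q ^ ((N : ℤ) + 1 - n) := by
    rw [← zpow_add₀ hQ0, ← zpow_natCast]
    congr 1
    push_cast
    ring
  have hpow' : Q ^ (2 * N + 1) = Q ^ ((N : ℤ) + 1 + n) * Q ^ ((N : ℤ) + 1 - n) / Q := by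
    rw [← hpow, pow_succ _ (2 * N + 1), mul_div_cancel_right₀ _ hQ0]
  simp only [centralQBinomial, Nat.cast_succ]
  rw [hP, hpow, hpow', ← add_sub_assoc (N : ℤ), hdown₂ ((N : ℤ) + n),
    show (N : ℤ) - (n + 1) = N - n - 1 by ring, hdown₂ ((N : ℤ) - n), hdown ((N : ℤ) + n),
    hdown ((N : ℤ) - n), show (N : ℤ) + (n + 1) = N + 1 + n by ring,
    show (N : ℤ) - (n - 1) = N + 1 - n by ring, show (N : ℤ) + n + 1 = N + 1 + n by ring,
    show (N : ℤ) - n + 1 = N + 1 - n by ring]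
  generalize Q ^ ((N : ℤ) + 1 + n) = s
  generalize Q ^ ((N : ℤ) + 1 - n) = t
  field_simp
  ring

lemma sq_zpow_mul_zpow_sq (hq0 : q ≠ 0) (N : ℕ) (n : ℤ) :
    (q ^ 2) ^ ((N : ℤ) + 1 - n) * q ^ (n ^ 2) = q ^ (2 * N + 1) * q ^ ((n - 1) ^ 2) := by
  rw [← zpow_natCast q 2, ← zpow_mul, ← zpow_natCast q (2 * N + 1), ← zpow_add₀ hq0,
    ← zpow_add₀ hq0]
  congr 1
  push_cast
  ring

theorem hasSum_centralQBinomial_mul_zpow [TopologicalSpace K] [IsTopologicalRing K]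
    (hq : ∀ k : ℕ, (q ^ 2) ^ (k + 1) ≠ 1) (hq0 : q ≠ 0) (hw : w ≠ 0) (N : ℕ) :
    HasSum (fun n : ℤ => centralQBinomial (q ^ 2) N n * (q ^ (n ^ 2) * w ^ n))
      (∏ k ∈ Finset.range N, ((1 + q ^ (2 * k + 1) * w) * (1 + q ^ (2 * k + 1) * w⁻¹))) := by
  have hww : w * w⁻¹ = 1 := mul_inv_cancel₀ hw
  induction N with
  | zero =>
    simp only [centralQBinomial_zero_left, Finset.range_zero, Finset.prod_empty]
    convert hasSum_ite_eq (0 : ℤ) (1 : K) using 2 with n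
    split_ifs with hn <;> simp [hn]
  | succ N ih =>
    have hmid := ih.mul_left (1 + (q ^ 2) ^ (2 * N + 1))
    have hright := ((Equiv.subRight (1 : ℤ)).hasSum_iff.mpr ih).mul_left (q ^ (2 * N + 1) * w)
    have hleft := ((Equiv.addRight (1 : ℤ)).hasSum_iff.mpr ih).mul_left (q ^ (2 * N + 1) * w⁻¹)
    rw [Finset.prod_range_succ]
    refine (congrArg₂ (HasSum · ·) (funext fun n => ?_) ?_).mpr ((hmid.add hright).add hleft)
    · have hsub := sq_zpow_mul_zpow_sq hq0 N n
      have hadd := sq_zpow_mul_zpow_sq hq0 N (-n)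
      rw [sub_neg_eq_add, neg_sq, ← neg_add', neg_sq] at hadd
      simp only [centralQBinomial_succ_left hq (pow_ne_zero 2 hq0), Function.comp,
        Equiv.subRight_apply, Equiv.coe_addRight, zpow_sub_one₀ hw, zpow_add_one₀ hw]
      generalize centralQBinomial (q ^ 2) N (n - 1) = x at *
      generalize centralQBinomial (q ^ 2) N (n + 1) = y at *
      linear_combination (x * w ^ n) * hsub + (y * w ^ n) * hadd -
        (q ^ (2 * N + 1) * q ^ ((n - 1) ^ 2) * x * w ^ n +
          q ^ (2 * N + 1) * q ^ ((n + 1) ^ 2) * y * w ^ n) * hww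
    · generalize ∏ k ∈ Finset.range N,
        ((1 + q ^ (2 * k + 1) * w) * (1 + q ^ (2 * k + 1) * w⁻¹)) = P
      linear_combination (P * q ^ (2 * (2 * N + 1))) * hww

end Field

section NormedField

variable {𝕜 : Type*} [NormedField 𝕜] {Q q w : 𝕜}

lemma pow_succ_ne_one_of_norm_lt_one (hQ : ‖Q‖ < 1) (k : ℕ) : Q ^ (k + 1) ≠ 1 := fun h =>
  (pow_lt_one₀ (norm_nonneg Q) hQ k.succ_ne_zero).ne (by rw [← norm_pow, h, norm_one])

lemma summable_norm_neg_pow_succ (hQ : ‖Q‖ < 1) : Summable fun k : ℕ => ‖-Q ^ (k + 1)‖ := by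
  simpa only [norm_neg, norm_pow] using
    (summable_nat_add_iff 1).mpr (summable_geometric_of_lt_one (norm_nonneg Q) hQ)

lemma summable_norm_odd_pow_mul (hq : ‖q‖ < 1) (w : 𝕜) :
    Summable fun k : ℕ => ‖q ^ (2 * k + 1) * w‖ := by
  have hgeom : Summable fun k : ℕ => (‖q‖ ^ 2) ^ k :=
    summable_geometric_of_lt_one (by positivity) (pow_lt_one₀ (norm_nonneg q) hq two_ne_zero)
  refine (hgeom.mul_left (‖q‖ * ‖w‖)).congr fun k => ?_
  rw [norm_mul, norm_pow]
  ring

lemma summable_norm_zpow_sq_mul_zpow (hq : ‖q‖ < 1) (hq0 : q ≠ 0) (hw : w ≠ 0) :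
    Summable fun n : ℤ => ‖q ^ (n ^ 2) * w ^ n‖ := by
  have hlog : 0 < -Real.log ‖q‖ / π :=
    div_pos (neg_pos.mpr (Real.log_neg (norm_pos_iff.mpr hq0) hq)) Real.pi_pos
  have hsum := ((summable_jacobiTheta₂_term_iff ((-Real.log ‖w‖ / (2 * π) : ℝ) * I)
    ((-Real.log ‖q‖ / π : ℝ) * I)).mpr (by simpa using hlog)).norm
  refine hsum.congr fun n => ?_
  rw [norm_jacobiTheta₂_term, im_ofReal_mul, im_ofReal_mul, I_im, mul_one, mul_one, norm_mul,
    norm_zpow, norm_zpow, ← Real.rpow_intCast ‖q‖, ← Real.rpow_intCast ‖w‖,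
    Real.rpow_def_of_pos (norm_pos_iff.mpr hq0), Real.rpow_def_of_pos (norm_pos_iff.mpr hw),
    ← Real.exp_add]
  congr 1
  push_cast
  field_simp
  ring

variable [CompleteSpace 𝕜]

lemma tendsto_qPochhammer (hQ : ‖Q‖ < 1) :
    Tendsto (qPochhammer Q) atTop (𝓝 (∏' k : ℕ, (1 + -Q ^ (k + 1)))) := by
  have hprod : Multipliable fun k : ℕ => 1 + -Q ^ (k + 1) :=
    multipliable_one_add_of_summable (summable_norm_neg_pow_succ hQ)
  exact hprod.hasProd.tendsto_prod_nat.congr fun N => by simp only [qPochhammer, sub_eq_add_neg]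

lemma tprod_one_add_neg_pow_ne_zero (hQ : ‖Q‖ < 1) : ∏' k : ℕ, (1 + -Q ^ (k + 1)) ≠ 0 :=
  tprod_one_add_ne_zero_of_summable
    (fun k => by
      rw [← sub_eq_add_neg]
      exact sub_ne_zero.mpr (pow_succ_ne_one_of_norm_lt_one hQ k).symm)
    (summable_norm_neg_pow_succ hQ)

lemma tendsto_invQPochhammer (hQ : ‖Q‖ < 1) :
    Tendsto (invQPochhammer Q) atTop (𝓝 (∏' k : ℕ, (1 + -Q ^ (k + 1)))⁻¹) := by
  have htoNat : Tendsto Int.toNat atTop atTop :=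
    tendsto_atTop.mpr fun b => (eventually_ge_atTop (b : ℤ)).mono fun m hm => by lia
  refine (((tendsto_qPochhammer hQ).inv₀ (tprod_one_add_neg_pow_ne_zero hQ)).comp htoNat).congr' ?_
  filter_upwards [eventually_ge_atTop 0] with m hm
  simp [invQPochhammer, not_lt.mpr hm]

lemma exists_norm_invQPochhammer_le (hQ : ‖Q‖ < 1) : ∃ C, ∀ m, ‖invQPochhammer Q m‖ ≤ C := by
  obtain ⟨C, hC⟩ := ((tendsto_qPochhammer hQ).inv₀
    (tprod_one_add_neg_pow_ne_zero hQ)).norm.bddAbove_range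
  rw [mem_upperBounds, Set.forall_mem_range] at hC
  refine ⟨C, fun m => ?_⟩
  rw [invQPochhammer]
  split_ifs
  · simpa using (norm_nonneg _).trans (hC 0)
  · exact hC _

lemma tendsto_centralQBinomial (hQ : ‖Q‖ < 1) (n : ℤ) :
    Tendsto (fun N => centralQBinomial Q N n) atTop (𝓝 (∏' k : ℕ, (1 + -Q ^ (k + 1)))⁻¹) := by
  have hinv {g : ℕ → ℤ} (hg : Tendsto g atTop atTop) := (tendsto_invQPochhammer hQ).comp hg
  have hlim := (((tendsto_qPochhammer hQ).comp (tendsto_id.const_mul_atTop' two_pos)).mul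
    (hinv (tendsto_atTop_add_const_right _ n tendsto_natCast_atTop_atTop))).mul
    (hinv (tendsto_atTop_add_const_right _ (-n) tendsto_natCast_atTop_atTop))
  rwa [mul_inv_cancel₀ (tprod_one_add_neg_pow_ne_zero hQ), one_mul] at hlim

lemma exists_norm_centralQBinomial_le (hQ : ‖Q‖ < 1) :
    ∃ C, ∀ N n, ‖centralQBinomial Q N n‖ ≤ C := by
  obtain ⟨A, hA⟩ := (tendsto_qPochhammer hQ).norm.bddAbove_range
  rw [mem_upperBounds, Set.forall_mem_range] at hA
  obtain ⟨B, hB⟩ := exists_norm_invQPochhammer_le hQ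
  have hA0 : 0 ≤ A := (norm_nonneg _).trans (hA 0)
  have hB0 : 0 ≤ B := (norm_nonneg _).trans (hB 0)
  refine ⟨A * B * B, fun N n => ?_⟩
  rw [centralQBinomial, norm_mul, norm_mul]
  gcongr
  exacts [hA _, hB _, hB _]

/-- The limit `N → ∞` of the finite identity `hasSum_centralQBinomial_mul_zpow`. -/
theorem jacobi_triple_product (hq : ‖q‖ < 1) (hq0 : q ≠ 0) (hw : w ≠ 0) :
    ∑' n : ℤ, q ^ (n ^ 2) * w ^ n =
      (∏' k : ℕ, (1 + -(q ^ 2) ^ (k + 1))) * ((∏' k : ℕ, (1 + q ^ (2 * k + 1) * w)) *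
        ∏' k : ℕ, (1 + q ^ (2 * k + 1) * w⁻¹)) := by
  have hQ : ‖q ^ 2‖ < 1 := norm_pow q 2 ▸ pow_lt_one₀ (norm_nonneg q) hq two_ne_zero
  obtain ⟨C, hC⟩ := exists_norm_centralQBinomial_le hQ
  have hsum := tendsto_tsum_of_dominated_convergence (𝓕 := atTop)
    ((summable_norm_zpow_sq_mul_zpow hq hq0 hw).mul_left C)
    (fun n => (tendsto_centralQBinomial hQ n).mul_const (q ^ (n ^ 2) * w ^ n))
    (Eventually.of_forall fun N n =>
      (norm_mul_le _ _).trans (mul_le_mul_of_nonneg_right (hC N n) (norm_nonneg _)))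
  have hprod (w : 𝕜) :=
    (multipliable_one_add_of_summable (summable_norm_odd_pow_mul hq w)).hasProd.tendsto_prod_nat
  have hfinite (N : ℕ) := (hasSum_centralQBinomial_mul_zpow
    (pow_succ_ne_one_of_norm_lt_one hQ) hq0 hw N).tsum_eq
  simp_rw [hfinite, Finset.prod_mul_distrib, tsum_mul_left] at hsum
  rw [← tendsto_nhds_unique hsum ((hprod w).mul (hprod w⁻¹)),
    mul_inv_cancel_left₀ (tprod_one_add_neg_pow_ne_zero hQ)]

lemma tsum_zpow_sq_mul_zpow_ne_zero (hq : ‖q‖ < 1) (hq0 : q ≠ 0) (hw : w ≠ 0)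
    (hpos : ∀ k : ℕ, 1 + q ^ (2 * k + 1) * w ≠ 0)
    (hneg : ∀ k : ℕ, 1 + q ^ (2 * k + 1) * w⁻¹ ≠ 0) :
    ∑' n : ℤ, q ^ (n ^ 2) * w ^ n ≠ 0 := by
  have hQ : ‖q ^ 2‖ < 1 := norm_pow q 2 ▸ pow_lt_one₀ (norm_nonneg q) hq two_ne_zero
  rw [jacobi_triple_product hq hq0 hw]
  exact mul_ne_zero (tprod_one_add_neg_pow_ne_zero hQ) (mul_ne_zero
    (tprod_one_add_ne_zero_of_summable hpos (summable_norm_odd_pow_mul hq w))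
    (tprod_one_add_ne_zero_of_summable hneg (summable_norm_odd_pow_mul hq w⁻¹)))

end NormedField

end TripleProduct

section ThetaNonvanishing

variable {z v τ : ℂ}

lemma jacobiTheta₂_term_eq_zpow (n : ℤ) (z τ : ℂ) :
    jacobiTheta₂_term n z τ = cexp (π * I * τ) ^ (n ^ 2) * cexp (2 * π * I * z) ^ n := by
  rw [jacobiTheta₂_term, ← exp_int_mul, ← exp_int_mul, ← exp_add]
  congr 1
  push_cast
  ring

lemma norm_exp_pi_mul_I_mul_lt_one (hτ : 0 < τ.im) : ‖cexp (π * I * τ)‖ < 1 := by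
  simpa [norm_exp] using mul_pos Real.pi_pos hτ

lemma one_add_exp_odd_pow_mul_exp_ne_zero
    (hz : ∀ m n : ℤ, z ≠ (m + 1 / 2) * τ + (n + 1 / 2)) (k : ℕ) :
    1 + cexp (π * I * τ) ^ (2 * k + 1) * cexp (2 * π * I * z) ≠ 0 := by
  intro h
  rw [← exp_nat_mul, ← exp_add, add_eq_zero_iff_neg_eq, ← exp_pi_mul_I,
    exp_eq_exp_iff_exists_int] at h
  obtain ⟨n, hn⟩ := h
  refine hz (-k - 1) (-n) (mul_left_cancel₀ two_pi_I_ne_zero ?_)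
  push_cast at hn ⊢
  linear_combination -hn

theorem jacobiTheta₂_ne_zero (hτ : 0 < τ.im)
    (hz : ∀ m n : ℤ, z ≠ (m + 1 / 2) * τ + (n + 1 / 2)) : jacobiTheta₂ z τ ≠ 0 := by
  have hneg (m n : ℤ) : -z ≠ (m + 1 / 2) * τ + (n + 1 / 2) := fun h =>
    hz (-m - 1) (-n - 1) (by push_cast; linear_combination -h)
  simp only [jacobiTheta₂, jacobiTheta₂_term_eq_zpow]
  refine tsum_zpow_sq_mul_zpow_ne_zero (norm_exp_pi_mul_I_mul_lt_one hτ) (exp_ne_zero _)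
    (exp_ne_zero _) (one_add_exp_odd_pow_mul_exp_ne_zero hz) fun k => ?_
  rw [← exp_neg, ← mul_neg]
  exact one_add_exp_odd_pow_mul_exp_ne_zero hneg k

lemma jacobiThetaZw_eq (v τ : ℂ) :
    jacobiThetaZw v τ =
      cexp (π * I * (v + 1 / 2) + π * I * τ / 4) * jacobiTheta₂ (v + 1 / 2 + τ / 2) τ := by
  rw [jacobiThetaZw, jacobiTheta₂, ← tsum_mul_left]
  refine tsum_congr fun n => ?_
  rw [jacobiTheta₂_term, ← exp_add, ← exp_add]
  congr 1
  ring

theorem jacobiThetaZw_ne_zero (hτ : 0 < τ.im) (hv : ∀ m n : ℤ, v ≠ m * τ + n) :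
    jacobiThetaZw v τ ≠ 0 := by
  rw [jacobiThetaZw_eq]
  exact mul_ne_zero (exp_ne_zero _)
    (jacobiTheta₂_ne_zero hτ fun m n h => hv m n (by linear_combination h))

lemma differentiableAt_jacobiThetaZw {v : ℂ → ℂ} (hτ : 0 < τ.im) (hv : DifferentiableAt ℂ v τ) :
    DifferentiableAt ℂ (fun σ => jacobiThetaZw (v σ) σ) τ := by
  simp only [jacobiThetaZw_eq]
  have hθ := (hasFDerivAt_jacobiTheta₂ (v τ + 1 / 2 + τ / 2) hτ).differentiableAt
  have harg : DifferentiableAt ℂ (fun σ => (v σ + 1 / 2 + σ / 2, σ)) τ := by fun_prop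
  exact DifferentiableAt.mul (by fun_prop)
    (DifferentiableAt.comp (f := fun σ => (v σ + 1 / 2 + σ / 2, σ)) τ hθ harg)

end ThetaNonvanishing

section Holomorphy

variable {z u v τ : ℂ}

/-- The `n`-th summand of the Appell–Lerch sum in `muZw u v τ`. -/
noncomputable def appellLerchTerm (n : ℤ) (u v τ : ℂ) : ℂ :=
  (-1 : ℂ) ^ n * cexp (2 * π * I * n * v) * cexp (π * I * τ * n * (n + 1)) /
    (1 - cexp (2 * π * I * u) * cexp (2 * π * I * n * τ))

lemma appellLerchTerm_eq (n : ℤ) (u v τ : ℂ) :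
    appellLerchTerm n u v τ =
      (-1 : ℂ) ^ n * jacobiTheta₂_term n (v + τ / 2) τ / (1 - cexp (2 * π * I * (u + n * τ))) := by
  rw [appellLerchTerm, mul_assoc, ← exp_add, ← exp_add, jacobiTheta₂_term]
  ring_nf

lemma one_sub_exp_ne_zero (hu : ∀ m n : ℤ, u ≠ m * τ + n) (n : ℤ) :
    1 - cexp (2 * π * I * u) * cexp (2 * π * I * n * τ) ≠ 0 := by
  intro h
  rw [← exp_add, sub_eq_zero, eq_comm, exp_eq_one_iff] at h
  obtain ⟨k, hk⟩ := h
  refine hu (-n) k (mul_left_cancel₀ two_pi_I_ne_zero ?_)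
  push_cast
  linear_combination hk

lemma half_le_norm_one_sub_exp (hz : 1 ≤ |z.im|) : 1 / 2 ≤ ‖1 - cexp (2 * π * I * z)‖ := by
  have hnorm : ‖cexp (2 * π * I * z)‖ = Real.exp (-(2 * π * z.im)) := by simp [norm_exp]
  have hπ := Real.pi_gt_three
  rcases le_abs.mp hz with him | him
  · have hsmall : Real.exp (-(2 * π * z.im)) ≤ 1 / 2 := by
      rw [Real.exp_neg, inv_le_comm₀ (Real.exp_pos _) one_half_pos]
      nlinarith [Real.add_one_le_exp (2 * π * z.im)]
    have htri := norm_sub_norm_le 1 (cexp (2 * π * I * z))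
    rw [hnorm, norm_one] at htri
    linarith
  · have hlarge := Real.add_one_le_exp (-(2 * π * z.im))
    have htri := norm_sub_norm_le (cexp (2 * π * I * z)) 1
    rw [hnorm, norm_one, norm_sub_rev] at htri
    nlinarith

lemma norm_appellLerchTerm_le {S T : ℝ} (hT : 0 < T) (hτ : T ≤ τ.im)
    (hv : |(v + τ / 2).im| ≤ S) {n : ℤ} (hu : 1 ≤ |(u + n * τ).im|) :
    ‖appellLerchTerm n u v τ‖ ≤ 2 * Real.exp (-π * (T * n ^ 2 - 2 * S * |n|)) := by
  have hden := half_le_norm_one_sub_exp hu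
  have hnum := norm_jacobiTheta₂_term_le hT hv hτ n
  rw [appellLerchTerm_eq, norm_div, norm_mul, norm_zpow, norm_neg, norm_one, one_zpow, one_mul,
    div_le_iff₀ (by linarith)]
  nlinarith [Real.exp_pos (-π * (T * n ^ 2 - 2 * S * |n|))]

lemma one_le_abs_im_add_intCast_mul {K T : ℝ} (hu : |u.im| ≤ K) (hτ : T ≤ τ.im) {n : ℤ}
    (hn : K + 1 ≤ |(n : ℝ)| * T) : 1 ≤ |(u + n * τ).im| := by
  have hnτ : |(n * τ : ℂ).im| = |(n : ℝ)| * |τ.im| := by simp [abs_mul]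
  have hmul := mul_le_mul_of_nonneg_left (hτ.trans (le_abs_self _)) (abs_nonneg (n : ℝ))
  have htri := abs_sub_abs_le_abs_sub (n * τ : ℂ).im (-u.im)
  rw [sub_neg_eq_add, add_comm (n * τ : ℂ).im, ← add_im, abs_neg] at htri
  linarith

lemma hasSumUniformlyOn_appellLerchTerm {u v : ℂ → ℂ} {K : Set ℂ} (hK : IsCompact K)
    (hK0 : ∀ τ ∈ K, 0 < τ.im) (hu : ContinuousOn u K) (hv : ContinuousOn v K) :
    HasSumUniformlyOn (fun (n : ℤ) τ => appellLerchTerm n (u τ) (v τ) τ)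
      (fun τ => ∑' n : ℤ, appellLerchTerm n (u τ) (v τ) τ) K := by
  obtain ⟨T, hT, hTK⟩ := hK.exists_forall_le' continuous_im.continuousOn hK0
  obtain ⟨A, hA⟩ := hK.exists_bound_of_continuousOn hu
  obtain ⟨S, hS⟩ := hK.exists_bound_of_continuousOn (f := fun τ => v τ + τ / 2)
    (hv.add (by fun_prop))
  have hsum : Summable fun n : ℤ => 2 * Real.exp (-π * (T * n ^ 2 - 2 * S * |n|)) := by
    simpa using (summable_pow_mul_jacobiTheta₂_term_bound S hT 0).mul_left 2
  have hlarge : ∀ᶠ n : ℤ in cofinite, A + 1 ≤ |(n : ℝ)| * T :=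
    ((tendsto_norm_cocompact_atTop.comp Int.tendsto_coe_cofinite).atTop_mul_const hT
      ).eventually_ge_atTop (A + 1)
  refine hasSumUniformlyOn_iff_tendstoUniformlyOn.mpr
    (tendstoUniformlyOn_tsum_of_cofinite_eventually hsum (hlarge.mono fun n hn τ hτ => ?_))
  exact norm_appellLerchTerm_le hT (hTK τ hτ) ((abs_im_le_norm _).trans (hS τ hτ))
    (one_le_abs_im_add_intCast_mul ((abs_im_le_norm _).trans (hA τ hτ)) (hTK τ hτ) hn)

theorem differentiableOn_muZw {u v : ℂ → ℂ} {U : Set ℂ} (hU : IsOpen U)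
    (hU0 : ∀ τ ∈ U, 0 < τ.im) (hu : DifferentiableOn ℂ u U) (hv : DifferentiableOn ℂ v U)
    (hulat : ∀ τ ∈ U, ∀ m n : ℤ, u τ ≠ m * τ + n) (hvlat : ∀ τ ∈ U, ∀ m n : ℤ, v τ ≠ m * τ + n) :
    DifferentiableOn ℂ (fun τ => muZw (u τ) (v τ) τ) U := by
  have hθ : DifferentiableOn ℂ (fun τ => jacobiThetaZw (v τ) τ) U := fun τ hτ =>
    (differentiableAt_jacobiThetaZw (hU0 τ hτ)
      (hv.differentiableAt (hU.mem_nhds hτ))).differentiableWithinAt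
  have hterm (n : ℤ) : DifferentiableOn ℂ (fun τ => appellLerchTerm n (u τ) (v τ) τ) U :=
    DifferentiableOn.div (by fun_prop) (by fun_prop) fun τ hτ => one_sub_exp_ne_zero (hulat τ hτ) n
  have hsum : DifferentiableOn ℂ (fun τ => ∑' n : ℤ, appellLerchTerm n (u τ) (v τ) τ) U :=
    SummableLocallyUniformlyOn.differentiableOn hU
      (hasSumLocallyUniformlyOn_of_forall_compact hU fun K hKU hK =>
        hasSumUniformlyOn_appellLerchTerm hK (fun τ hτ => hU0 τ (hKU hτ))
          (hu.continuousOn.mono hKU) (hv.continuousOn.mono hKU)).summableLocallyUniformlyOn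
      fun n τ hτ => (hterm n).differentiableAt (hU.mem_nhds hτ)
  exact (DifferentiableOn.div (by fun_prop) hθ
    fun τ hτ => jacobiThetaZw_ne_zero (hU0 τ hτ) (hvlat τ hτ)).mul hsum

end Holomorphy

section GaussianErf

/-- The error function in Zwegers' normalization `E(x) = 2 ∫₀ˣ e^{-πt²} dt`, which tends to `±1`
at `±∞`; it is the nonholomorphic ingredient of `Rzw`. -/
noncomputable def gaussianErf (x : ℝ) : ℝ := 2 * ∫ t in (0 : ℝ)..x, Real.exp (-π * t ^ 2)

lemma hasDerivAt_gaussianErf (x : ℝ) :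
    HasDerivAt gaussianErf (2 * Real.exp (-π * x ^ 2)) x :=
  (((by fun_prop : Continuous fun t : ℝ => Real.exp (-π * t ^ 2)).integral_hasStrictDerivAt
    0 x).hasDerivAt).const_mul 2

lemma gaussianErf_neg (x : ℝ) : gaussianErf (-x) = -gaussianErf x := by
  have hsymm := intervalIntegral.integral_comp_neg (a := 0) (b := x)
    fun t : ℝ => Real.exp (-π * t ^ 2)
  simp only [neg_sq, neg_zero] at hsymm
  rw [gaussianErf, gaussianErf, hsymm, intervalIntegral.integral_symm, mul_neg]

lemma integral_Ioi_exp_neg_pi_mul_sq : ∫ t in Set.Ioi (0 : ℝ), Real.exp (-π * t ^ 2) = 1 / 2 := by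
  rw [integral_gaussian_Ioi, div_self Real.pi_ne_zero, Real.sqrt_one]

lemma one_sub_gaussianErf (x : ℝ) :
    1 - gaussianErf x = 2 * ∫ t in Set.Ioi x, Real.exp (-π * t ^ 2) := by
  have hint := integrable_exp_neg_mul_sq Real.pi_pos
  have hsplit := intervalIntegral.integral_interval_add_Ioi
    (hint.integrableOn (s := Set.Ioi 0)) (hint.integrableOn (s := Set.Ioi x))
  rw [integral_Ioi_exp_neg_pi_mul_sq] at hsplit
  rw [gaussianErf]
  linarith

lemma gaussianErf_le_one (x : ℝ) : gaussianErf x ≤ 1 := by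
  rw [← sub_nonneg, one_sub_gaussianErf]
  positivity

lemma abs_gaussianErf_le_one (x : ℝ) : |gaussianErf x| ≤ 1 :=
  abs_le'.mpr ⟨gaussianErf_le_one x, gaussianErf_neg x ▸ gaussianErf_le_one (-x)⟩

lemma one_sub_gaussianErf_le {x : ℝ} (hx : 0 ≤ x) :
    1 - gaussianErf x ≤ Real.exp (-π * x ^ 2) := by
  have hint := integrable_exp_neg_mul_sq Real.pi_pos
  have hshift : ∫ t in Set.Ioi x, Real.exp (-π * t ^ 2) =
      ∫ t in Set.Ioi 0, Real.exp (-π * (t + x) ^ 2) := by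
    rw [← (measurePreserving_add_right volume x).setIntegral_preimage_emb
      (measurableEmbedding_addRight x), Set.preimage_add_const_Ioi, sub_self]
  have hmono : ∫ t in Set.Ioi 0, Real.exp (-π * (t + x) ^ 2) ≤
      ∫ t in Set.Ioi 0, Real.exp (-π * x ^ 2) * Real.exp (-π * t ^ 2) := by
    refine setIntegral_mono_on (hint.comp_add_right x).integrableOn
      (hint.const_mul _).integrableOn measurableSet_Ioi fun t ht => ?_
    rw [← Real.exp_add, Real.exp_le_exp]
    nlinarith [mul_nonneg Real.pi_nonneg (mul_nonneg (Set.mem_Ioi.mp ht).le hx)]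
  rw [integral_const_mul, integral_Ioi_exp_neg_pi_mul_sq, ← hshift] at hmono
  linarith [one_sub_gaussianErf x]

lemma abs_sign_sub_gaussianErf_le_of_mul_nonneg {x s : ℝ} (hx : x ≠ 0) (hxs : 0 ≤ x * s) :
    |x.sign - gaussianErf s| ≤ Real.exp (-π * s ^ 2) := by
  rcases hx.lt_or_gt with hx | hx
  · have hs : 0 ≤ -s := neg_nonneg.mpr (nonpos_of_mul_nonneg_right hxs hx)
    have htail := one_sub_gaussianErf_le hs
    rw [gaussianErf_neg, neg_sq] at htail
    have hone := gaussianErf_neg s ▸ gaussianErf_le_one (-s)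
    rw [Real.sign_of_neg hx, abs_of_nonpos (by linarith)]
    linarith
  · rw [Real.sign_of_pos hx, abs_of_nonneg (sub_nonneg.mpr (gaussianErf_le_one s))]
    exact one_sub_gaussianErf_le (nonneg_of_mul_nonneg_right hxs hx)

/-- When `0` separates `x` from `x + a` there is no decay, but then `|x + a| ≤ |a|` and the factor
`exp (π (at)²)` turns the trivial bound `2` into a Gaussian one. -/
lemma abs_sign_sub_gaussianErf_le {x : ℝ} (hx : x ≠ 0) (a : ℝ) {t : ℝ} (ht : 0 ≤ t) :
    |x.sign - gaussianErf ((x + a) * t)| ≤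
      2 * (Real.exp (π * (a * t) ^ 2) * Real.exp (-π * ((x + a) * t) ^ 2)) := by
  have hexp_one : 1 ≤ Real.exp (π * (a * t) ^ 2) := Real.one_le_exp (by positivity)
  have hexp_pos := Real.exp_pos (-π * ((x + a) * t) ^ 2)
  rcases le_or_gt 0 (x * (x + a)) with hsame | hopp
  · have htail := abs_sign_sub_gaussianErf_le_of_mul_nonneg hx
      (show 0 ≤ x * ((x + a) * t) by rw [← mul_assoc]; positivity)
    nlinarith
  · have htrivial : |x.sign - gaussianErf ((x + a) * t)| ≤ 2 := by
      have hsign : |x.sign| ≤ 1 := by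
        obtain h | h := Real.sign_apply_eq_of_ne_zero x hx <;> simp [h]
      linarith [abs_sub x.sign (gaussianErf ((x + a) * t)), abs_gaussianErf_le_one ((x + a) * t)]
    have hsq : (x + a) ^ 2 ≤ a ^ 2 := by nlinarith [sq_nonneg x]
    have hexp : 1 ≤ Real.exp (π * (a * t) ^ 2) * Real.exp (-π * ((x + a) * t) ^ 2) := by
      rw [← Real.exp_add]
      refine Real.one_le_exp ?_
      have hscaled := mul_le_mul_of_nonneg_left hsq (mul_nonneg Real.pi_nonneg (sq_nonneg t))
      linarith
    linarith

end GaussianErf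

section WirtingerDerivative

/-- The coefficient `q` of a real-linear map `h ↦ p * h + q * conj h` on `ℂ`. -/
noncomputable def conjCoeff : (ℂ →L[ℝ] ℂ) →L[ℝ] ℂ :=
  (1 / 2 : ℂ) • (ContinuousLinearMap.apply ℝ ℂ (1 : ℂ) + I • ContinuousLinearMap.apply ℝ ℂ I)

/-- The Wirtinger derivative `∂f/∂τ̄` exists at `τ`, in the sense that `f` is real differentiable
there, and equals `q`. -/
def HasWirtingerBarDerivAt (f : ℂ → ℂ) (q τ : ℂ) : Prop :=
  ∃ L : ℂ →L[ℝ] ℂ, HasFDerivAt f L τ ∧ conjCoeff L = q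

lemma conjCoeff_apply (L : ℂ →L[ℝ] ℂ) : conjCoeff L = 1 / 2 * (L 1 + I * L I) := rfl

lemma conjCoeff_smul (c : ℂ) (L : ℂ →L[ℝ] ℂ) : conjCoeff (c • L) = c * conjCoeff L := by
  simp only [conjCoeff_apply, smul_apply, smul_eq_mul]
  ring

namespace HasWirtingerBarDerivAt

variable {f g : ℂ → ℂ} {p q τ : ℂ}

lemma add (hf : HasWirtingerBarDerivAt f p τ) (hg : HasWirtingerBarDerivAt g q τ) :
    HasWirtingerBarDerivAt (fun σ => f σ + g σ) (p + q) τ := by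
  obtain ⟨L, hL, rfl⟩ := hf
  obtain ⟨M, hM, rfl⟩ := hg
  exact ⟨L + M, hL.add hM, map_add _ _ _⟩

lemma const_mul (c : ℂ) (hf : HasWirtingerBarDerivAt f q τ) :
    HasWirtingerBarDerivAt (fun σ => c * f σ) (c * q) τ := by
  obtain ⟨L, hL, rfl⟩ := hf
  exact ⟨c • L, hL.const_smul c, conjCoeff_smul c L⟩

lemma congr_of_eventuallyEq (hg : HasWirtingerBarDerivAt g q τ) (hfg : f =ᶠ[𝓝 τ] g) :
    HasWirtingerBarDerivAt f q τ := by
  obtain ⟨L, hL, hq⟩ := hg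
  exact ⟨L, hL.congr_of_eventuallyEq hfg, hq⟩

lemma of_differentiableAt (hf : DifferentiableAt ℂ f τ) :
    HasWirtingerBarDerivAt f 0 τ := by
  refine ⟨_, hf.hasFDerivAt.restrictScalars ℝ, ?_⟩
  have hI : fderiv ℂ f τ I = I * fderiv ℂ f τ 1 := by
    simpa only [smul_eq_mul, mul_one] using (fderiv ℂ f τ).map_smul I 1
  rw [conjCoeff_apply, ContinuousLinearMap.coe_restrictScalars', hI, ← mul_assoc, I_mul_I]
  ring

lemma tsum {ι : Type*} {f : ι → ℂ → ℂ} {f' : ι → ℂ → ℂ →L[ℝ] ℂ} {B : ι → ℝ} {s : Set ℂ}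
    (hB : Summable B) (hs : IsOpen s) (hs' : IsPreconnected s)
    (hf : ∀ n, ∀ σ ∈ s, HasFDerivAt (f n) (f' n σ) σ) (hf' : ∀ n, ∀ σ ∈ s, ‖f' n σ‖ ≤ B n)
    (hτ : τ ∈ s) (hf0 : Summable fun n => f n τ) :
    HasWirtingerBarDerivAt (fun σ => ∑' n, f n σ) (∑' n, conjCoeff (f' n τ)) τ :=
  ⟨_, hasFDerivAt_tsum_of_isPreconnected hB hs hs' hf hf' hτ hf0 hτ,
    conjCoeff.map_tsum (hB.of_norm_bounded fun n => hf' n τ hτ)⟩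

lemma half_mul_deriv_add_I_mul_deriv (hf : HasWirtingerBarDerivAt f q τ) :
    1 / 2 * (deriv (fun t : ℝ => f (τ + t)) 0 + I * deriv (fun t : ℝ => f (τ + t * I)) 0) = q := by
  obtain ⟨L, hL, rfl⟩ := hf
  have hline (d : ℂ) : deriv (fun t : ℝ => f (τ + t * d)) 0 = L d := by
    simpa only [lineDeriv, real_smul] using (hL.hasLineDerivAt d).lineDeriv
  rw [conjCoeff_apply, hline I]
  simpa using hline 1

end HasWirtingerBarDerivAt

end WirtingerDerivative

section NonholomorphicSeries

/-- A summand of Zwegers' `R`-function, up to a holomorphic factor: `m` is the (shifted)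
summation index and `ε` the sign of the unshifted one. -/
noncomputable def zwegersTerm (ε m : ℝ) (σ : ℂ) : ℂ :=
  ((ε - gaussianErf (m * √(2 * σ.im)) : ℝ) : ℂ) * cexp (-π * I * m ^ 2 * σ)

/-- The Wirtinger derivative `∂/∂σ̄` of `zwegersTerm ε m`, a summand of a unary theta function
at `-σ̄`. -/
noncomputable def shadowTerm (m : ℝ) (σ : ℂ) : ℂ :=
  -I * (m / √(2 * σ.im) : ℝ) * cexp (-π * I * m ^ 2 * conj σ)

/-- The real Fréchet derivative of `zwegersTerm ε m`; recall `conj - 1 = -2i Im`. -/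
noncomputable def zwegersTermFDeriv (ε m : ℝ) (σ : ℂ) : ℂ →L[ℝ] ℂ :=
  (-π * I * m ^ 2 * zwegersTerm ε m σ) • ContinuousLinearMap.id ℝ ℂ +
    shadowTerm m σ • ((conjCLE : ℂ →L[ℝ] ℂ) - ContinuousLinearMap.id ℝ ℂ)

variable {x T B : ℝ} {σ τ : ℂ}

lemma conjCoeff_zwegersTermFDeriv (ε m : ℝ) (σ : ℂ) :
    conjCoeff (zwegersTermFDeriv ε m σ) = shadowTerm m σ := by
  simp only [conjCoeff_apply, zwegersTermFDeriv, add_apply, smul_apply, sub_apply,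
    ContinuousLinearMap.id_apply, ContinuousLinearEquiv.coe_coe, conjCLE_apply, map_one, conj_I,
    smul_eq_mul]
  linear_combination (1 / 2 * (-π * I * m ^ 2 * zwegersTerm ε m σ) - shadowTerm m σ) * I_sq

lemma exp_neg_mul_sq_sqrt_mul_exp (m : ℝ) (hσ : 0 < σ.im) :
    (Real.exp (-π * (m * √(2 * σ.im)) ^ 2) : ℂ) * cexp (-π * I * m ^ 2 * σ) =
      cexp (-π * I * m ^ 2 * conj σ) := by
  have hconj : σ - conj σ = 2 * σ.im * I := by simpa using sub_conj σ
  rw [mul_pow, Real.sq_sqrt (by positivity), ofReal_exp, ← exp_add]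
  congr 1
  push_cast
  linear_combination (-π * I * m ^ 2) * hconj - 2 * π * m ^ 2 * σ.im * I_sq

lemma hasFDerivAt_zwegersTerm (ε m : ℝ) (hσ : 0 < σ.im) :
    HasFDerivAt (zwegersTerm ε m) (zwegersTermFDeriv ε m σ) σ := by
  have hne : 2 * σ.im ≠ 0 := by positivity
  have hsqrt := (((imCLM.hasFDerivAt (x := σ)).const_mul 2).sqrt hne).const_mul m
  have herf := ((hasDerivAt_gaussianErf _).comp_hasFDerivAt σ hsqrt).const_sub ε
  have hexp := (((hasDerivAt_id σ).const_mul (-π * I * m ^ 2)).cexp.hasFDerivAt).restrictScalars ℝ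
  refine ((ofRealCLM.hasFDerivAt.comp σ herf).mul hexp).congr_fderiv ?_
  refine ContinuousLinearMap.ext fun h => ?_
  have hgauss := exp_neg_mul_sq_sqrt_mul_exp m hσ
  have hsqrt_ne : (√(2 * σ.im) : ℂ) ≠ 0 := by
    exact_mod_cast (Real.sqrt_pos.mpr (by positivity)).ne'
  have hconj : conj h - h = -(2 * h.im * I) := by rw [← neg_sub, sub_conj]; push_cast; ring
  simp only [zwegersTermFDeriv, shadowTerm, zwegersTerm, ← hgauss, hconj, add_apply, smul_apply,
    sub_apply, neg_apply, ContinuousLinearMap.comp_apply, ContinuousLinearMap.coe_restrictScalars',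
    ContinuousLinearMap.toSpanSingleton_apply, ContinuousLinearMap.id_apply,
    ContinuousLinearEquiv.coe_coe, conjCLE_apply, ofRealCLM_apply, imCLM_apply, smul_eq_mul,
    Function.comp_apply, id_eq]
  generalize Real.exp (-π * (m * √(2 * σ.im)) ^ 2) = E
  push_cast
  field_simp
  linear_combination -2 * m * E * h.im * I_sq

lemma norm_exp_neg_pi_mul_I_mul_sq (m : ℝ) (σ : ℂ) :
    ‖cexp (-π * I * m ^ 2 * σ)‖ = Real.exp (π * m ^ 2 * σ.im) := by
  rw [norm_exp, show -π * I * m ^ 2 * σ = ((-π * m ^ 2 : ℝ) : ℂ) * (I * σ) by push_cast; ring,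
    re_ofReal_mul, I_mul_re]
  ring_nf

lemma norm_zwegersTerm_le (hx : x ≠ 0) (a : ℝ) (hσ : 0 < σ.im) :
    ‖zwegersTerm x.sign (x + a) σ‖ ≤
      2 * Real.exp (2 * π * a ^ 2 * σ.im) * Real.exp (-π * (x + a) ^ 2 * σ.im) := by
  rw [zwegersTerm, norm_mul, norm_real, norm_exp_neg_pi_mul_I_mul_sq, Real.norm_eq_abs]
  refine (mul_le_mul_of_nonneg_right
    (abs_sign_sub_gaussianErf_le hx a (Real.sqrt_nonneg _)) (Real.exp_nonneg _)).trans_eq ?_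
  rw [mul_pow, mul_pow, Real.sq_sqrt (by positivity)]
  simp only [mul_assoc, ← Real.exp_add]
  ring_nf

lemma norm_shadowTerm (m : ℝ) (σ : ℂ) :
    ‖shadowTerm m σ‖ = |m| / √(2 * σ.im) * Real.exp (-π * m ^ 2 * σ.im) := by
  rw [shadowTerm, norm_mul, norm_mul, norm_neg, norm_I, one_mul, norm_real, Real.norm_eq_abs,
    abs_div, abs_of_nonneg (Real.sqrt_nonneg _), norm_exp_neg_pi_mul_I_mul_sq, conj_im]
  ring_nf

lemma norm_zwegersTermFDeriv_le (ε m : ℝ) (σ : ℂ) :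
    ‖zwegersTermFDeriv ε m σ‖ ≤ π * m ^ 2 * ‖zwegersTerm ε m σ‖ + 2 * ‖shadowTerm m σ‖ := by
  have hconj : ‖(conjCLE : ℂ →L[ℝ] ℂ) - ContinuousLinearMap.id ℝ ℂ‖ ≤ 2 :=
    (norm_sub_le _ _).trans (by rw [conjCLE_norm, ContinuousLinearMap.norm_id]; norm_num)
  have hcoeff : ‖-π * I * m ^ 2 * zwegersTerm ε m σ‖ = π * m ^ 2 * ‖zwegersTerm ε m σ‖ := by
    simp [abs_of_pos Real.pi_pos]
  refine (norm_add_le _ _).trans (add_le_add ?_ ?_)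
  · rw [norm_smul, hcoeff, ContinuousLinearMap.norm_id, mul_one]
  · rw [norm_smul, mul_comm]
    gcongr

lemma norm_zwegersTermFDeriv_sign_le (hx : x ≠ 0) (a : ℝ) (hT : 0 < T) (hTσ : T ≤ σ.im)
    (hσB : σ.im ≤ B) :
    ‖zwegersTermFDeriv x.sign (x + a) σ‖ ≤
      (2 * π * Real.exp (2 * π * a ^ 2 * B) + 2 / √(2 * T)) *
        ((1 + (x + a) ^ 2) * Real.exp (-π * (x + a) ^ 2 * T)) := by
  have hσ : 0 < σ.im := hT.trans_le hTσ
  have hdecay : Real.exp (-π * (x + a) ^ 2 * σ.im) ≤ Real.exp (-π * (x + a) ^ 2 * T) :=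
    Real.exp_le_exp.mpr (mul_le_mul_of_nonpos_left hTσ
      (by rw [neg_mul]; exact neg_nonpos.mpr (by positivity)))
  have habs : |x + a| ≤ 1 + (x + a) ^ 2 := by nlinarith [sq_nonneg (|x + a| - 1), sq_abs (x + a)]
  have hsq : (x + a) ^ 2 ≤ 1 + (x + a) ^ 2 := by linarith
  calc ‖zwegersTermFDeriv x.sign (x + a) σ‖
      ≤ π * (x + a) ^ 2 * (2 * Real.exp (2 * π * a ^ 2 * σ.im) *
            Real.exp (-π * (x + a) ^ 2 * σ.im)) +
          2 * (|x + a| / √(2 * σ.im) * Real.exp (-π * (x + a) ^ 2 * σ.im)) := by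
        refine (norm_zwegersTermFDeriv_le _ _ _).trans ?_
        rw [norm_shadowTerm]
        gcongr
        exact norm_zwegersTerm_le hx a hσ
    _ ≤ π * (1 + (x + a) ^ 2) * (2 * Real.exp (2 * π * a ^ 2 * B) *
            Real.exp (-π * (x + a) ^ 2 * T)) +
          2 * ((1 + (x + a) ^ 2) / √(2 * T) * Real.exp (-π * (x + a) ^ 2 * T)) := by
        gcongr
    _ = _ := by ring

lemma summable_one_add_sq_mul_exp_neg_sq (c : ℝ) (hT : 0 < T) :
    Summable fun n : ℤ => (1 + (n + c) ^ 2) * Real.exp (-π * (n + c) ^ 2 * T) := by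
  have hsum₀ := (summable_pow_mul_jacobiTheta₂_term_bound (T * |c|) hT 0).mul_left (1 + 2 * c ^ 2)
  have hsum₂ := (summable_pow_mul_jacobiTheta₂_term_bound (T * |c|) hT 2).mul_left 2
  refine Summable.of_nonneg_of_le (fun n => by positivity) (fun n => ?_) (hsum₀.add hsum₂)
  have hexp : Real.exp (-π * (n + c) ^ 2 * T) ≤
      Real.exp (-π * (T * n ^ 2 - 2 * (T * |c|) * |n|)) := by
    have hcross : -(|c| * |(n : ℝ)|) ≤ c * n := abs_mul c n ▸ neg_abs_le _
    have hsq : (n : ℝ) ^ 2 - 2 * |c| * |(n : ℝ)| ≤ (n + c) ^ 2 := by nlinarith [sq_nonneg c]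
    have hscaled := mul_le_mul_of_nonneg_left hsq (mul_pos Real.pi_pos hT).le
    rw [Real.exp_le_exp]
    push_cast
    linarith
  have hpoly : 1 + (n + c) ^ 2 ≤ 1 + 2 * c ^ 2 + 2 * (|n| : ℤ) ^ 2 := by
    rw [Int.cast_abs, sq_abs]
    nlinarith [sq_nonneg (n - c)]
  refine (mul_le_mul hpoly hexp (Real.exp_nonneg _) (by positivity)).trans_eq ?_
  ring

lemma add_half_ne_zero (n : ℤ) : (n : ℝ) + 1 / 2 ≠ 0 := by
  intro h
  have hodd : ((2 * n + 1 : ℤ) : ℝ) = 0 := by push_cast; linarith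
  have := Int.cast_eq_zero.mp hodd
  lia

theorem hasWirtingerBarDerivAt_tsum_zwegersTerm {c : ℤ → ℂ} (hc : ∀ n, ‖c n‖ ≤ 1) (a : ℝ)
    (hτ : 0 < τ.im) :
    HasWirtingerBarDerivAt
      (fun σ => ∑' n : ℤ, c n * zwegersTerm (Real.sign (n + 1 / 2)) (n + 1 / 2 + a) σ)
      (∑' n : ℤ, c n * shadowTerm (n + 1 / 2 + a) τ) τ := by
  have hsum {T : ℝ} (hT : 0 < T) : Summable fun n : ℤ =>
      (1 + ((n : ℝ) + 1 / 2 + a) ^ 2) * Real.exp (-π * (n + 1 / 2 + a) ^ 2 * T) := by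
    simpa only [add_assoc] using summable_one_add_sq_mul_exp_neg_sq (1 / 2 + a) hT
  have hstrip : τ ∈ im ⁻¹' Set.Ioo (τ.im / 2) (2 * τ.im) := ⟨by linarith, by linarith⟩
  have hpos {σ : ℂ} (hσ : σ ∈ im ⁻¹' Set.Ioo (τ.im / 2) (2 * τ.im)) : 0 < σ.im :=
    (half_pos hτ).trans hσ.1
  have hcoeff (n : ℤ) : c n * shadowTerm (n + 1 / 2 + a) τ =
      conjCoeff (c n • zwegersTermFDeriv (Real.sign (n + 1 / 2)) (n + 1 / 2 + a) τ) := by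
    rw [conjCoeff_smul, conjCoeff_zwegersTermFDeriv]
  rw [tsum_congr hcoeff]
  set C := 2 * π * Real.exp (2 * π * a ^ 2 * (2 * τ.im)) + 2 / √(2 * (τ.im / 2))
  refine HasWirtingerBarDerivAt.tsum
    (f' := fun n σ => c n • zwegersTermFDeriv (Real.sign (n + 1 / 2)) (n + 1 / 2 + a) σ)
    ((hsum (half_pos hτ)).mul_left C) (isOpen_Ioo.preimage continuous_im)
    ((convex_Ioo _ _).is_linear_preimage imLm.isLinear).isPreconnected
    (fun n σ hσ => (hasFDerivAt_zwegersTerm _ _ (hpos hσ)).const_smul (c n))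
    (fun n σ hσ => ?_) hstrip ?_
  · rw [norm_smul]
    exact (mul_le_of_le_one_left (norm_nonneg _) (hc n)).trans
      (norm_zwegersTermFDeriv_sign_le (add_half_ne_zero n) a (half_pos hτ) hσ.1.le hσ.2.le)
  · refine ((hsum hτ).mul_left (2 * Real.exp (2 * π * a ^ 2 * τ.im))).of_norm_bounded fun n => ?_
    rw [norm_mul]
    refine (mul_le_of_le_one_left (norm_nonneg _) (hc n)).trans
      ((norm_zwegersTerm_le (add_half_ne_zero n) a hτ).trans ?_)
    gcongr
    exact le_mul_of_one_le_left (Real.exp_nonneg _) (by linarith [sq_nonneg (n + 1 / 2 + a)])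

end NonholomorphicSeries

section UnaryTheta

/-- The coefficient of the summand with index `n + 1/2` in `Rzw (a * σ - b) σ`, when that function
is expanded in the functions `zwegersTerm`. -/
noncomputable def rzwCoeff (b : ℝ) (n : ℤ) : ℂ := (-1) ^ n * cexp (2 * π * I * (n + 1 / 2) * b)

lemma norm_rzwCoeff (b : ℝ) (n : ℤ) : ‖rzwCoeff b n‖ = 1 := by
  rw [rzwCoeff, norm_mul, norm_zpow, norm_neg, norm_one, one_zpow, one_mul,
    show 2 * π * I * (n + 1 / 2) * b = ((2 * π * (n + 1 / 2) * b : ℝ) : ℂ) * I by push_cast; ring,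
    norm_exp_ofReal_mul_I]

lemma exp_mul_Rzw_eq_tsum (a b : ℝ) {σ : ℂ} (hσ : 0 < σ.im) :
    cexp (-π * I * a ^ 2 * σ) * Rzw (a * σ - b) σ =
      ∑' n : ℤ, rzwCoeff b n * zwegersTerm (Real.sign (n + 1 / 2)) (n + 1 / 2 + a) σ := by
  have him : (a * σ - b).im / σ.im = a := by
    rw [sub_im, ofReal_im, sub_zero, im_ofReal_mul, mul_div_cancel_right₀ _ hσ.ne']
  rw [Rzw, ← tsum_mul_left]
  refine tsum_congr fun n => ?_
  have hexp : cexp (-π * I * a ^ 2 * σ) *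
        cexp (-π * I * (n + 1 / 2) ^ 2 * σ - 2 * π * I * (n + 1 / 2) * (a * σ - b)) =
      cexp (2 * π * I * (n + 1 / 2) * b) *
        cexp (-π * I * ((n + 1 / 2 + a : ℝ) : ℂ) ^ 2 * σ) := by
    rw [← exp_add, ← exp_add]
    congr 1
    push_cast
    ring
  rw [him, rzwCoeff, zwegersTerm, gaussianErf, mul_left_comm, hexp]
  ring

lemma exp_pi_mul_I_mul_add_half (n : ℤ) : cexp (π * I * (n + 1 / 2)) = I * (-1) ^ n := by
  rw [mul_add, exp_add, mul_comm _ (n : ℂ), exp_int_mul, exp_pi_mul_I, mul_one_div,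
    mul_div_right_comm, exp_pi_div_two_mul_I, mul_comm]

lemma exp_mul_rzwCoeff_mul_shadowTerm (a b : ℝ) (τ : ℂ) (n : ℤ) :
    √2 * cexp (2 * π * I * (a * (b + 1 / 2))) * (rzwCoeff b n * shadowTerm (n + 1 / 2 + a) τ) =
      -(1 / √τ.im) * ((n + (a + 1 / 2 : ℝ)) * cexp (2 * π * I * (b + 1 / 2 : ℝ) *
        (n + (a + 1 / 2 : ℝ))) * cexp (π * I * -conj τ * (n + (a + 1 / 2 : ℝ)) ^ 2)) := by
  have hsqrt_two : (√2 : ℂ) ≠ 0 := by norm_num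
  have hphase : cexp (2 * π * I * (b + 1 / 2 : ℝ) * (n + (a + 1 / 2 : ℝ))) =
      I * cexp (2 * π * I * (a * (b + 1 / 2))) * rzwCoeff b n := by
    rw [rzwCoeff, mul_right_comm I, ← mul_assoc I, ← exp_pi_mul_I_mul_add_half, ← exp_add,
      ← exp_add]
    congr 1
    push_cast
    ring
  have hgauss : cexp (π * I * -conj τ * (n + (a + 1 / 2 : ℝ)) ^ 2) =
      cexp (-π * I * (n + 1 / 2 + a : ℝ) ^ 2 * conj τ) := by
    congr 1
    push_cast
    ring
  rw [hphase, hgauss, shadowTerm, Real.sqrt_mul zero_le_two]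
  push_cast
  field_simp
  ring

lemma exp_mul_tsum_shadowTerm_eq_gUnary (a b : ℝ) (τ : ℂ) :
    √2 * cexp (2 * π * I * (a * (b + 1 / 2))) *
        ∑' n : ℤ, rzwCoeff b n * shadowTerm (n + 1 / 2 + a) τ =
      -(1 / √τ.im) * gUnary (a + 1 / 2) (b + 1 / 2) (-conj τ) := by
  rw [gUnary, ← tsum_mul_left, ← tsum_mul_left]
  exact tsum_congr (exp_mul_rzwCoeff_mul_shadowTerm a b τ)

end UnaryTheta

section Shadow

variable {a b : ℝ} {u v : ℂ → ℂ} {U : Set ℂ} {τ : ℂ}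

lemma MHat_eq_of_sub_eq (hτ : 0 < τ.im) (huv : u τ - v τ = a * τ - b) :
    MHat a b u v τ = -(√2 * cexp (2 * π * I * (a * (b + 1 / 2)))) *
      (cexp (-π * I * a ^ 2 * τ) * muZw (u τ) (v τ) τ + I / 2 *
        ∑' n : ℤ, rzwCoeff b n * zwegersTerm (Real.sign (n + 1 / 2)) (n + 1 / 2 + a) τ) := by
  rw [← exp_mul_Rzw_eq_tsum a b hτ, MHat, muHat, huv]
  ring

theorem hasWirtingerBarDerivAt_MHat (hU : IsOpen U) (hU0 : ∀ τ ∈ U, 0 < τ.im)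
    (hu : DifferentiableOn ℂ u U) (hv : DifferentiableOn ℂ v U)
    (huv : ∀ τ ∈ U, u τ - v τ = a * τ - b)
    (hulat : ∀ τ ∈ U, ∀ m n : ℤ, u τ ≠ m * τ + n) (hvlat : ∀ τ ∈ U, ∀ m n : ℤ, v τ ≠ m * τ + n)
    (hτ : τ ∈ U) :
    HasWirtingerBarDerivAt (MHat a b u v)
      (I / (2 * √τ.im) * gUnary (a + 1 / 2) (b + 1 / 2) (-conj τ)) τ := by
  have hmu : DifferentiableAt ℂ (fun σ => cexp (-π * I * a ^ 2 * σ) * muZw (u σ) (v σ) σ) τ :=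
    DifferentiableAt.mul (by fun_prop)
      ((differentiableOn_muZw hU hU0 hu hv hulat hvlat).differentiableAt (hU.mem_nhds hτ))
  have hR := hasWirtingerBarDerivAt_tsum_zwegersTerm (fun n => (norm_rzwCoeff b n).le) a (hU0 τ hτ)
  have hsum := ((HasWirtingerBarDerivAt.of_differentiableAt hmu).add
    (hR.const_mul (I / 2))).const_mul (-(√2 * cexp (2 * π * I * (a * (b + 1 / 2)))))
  have hMHat : MHat a b u v =ᶠ[𝓝 τ] _ :=
    eventually_of_mem (hU.mem_nhds hτ) fun σ hσ => MHat_eq_of_sub_eq (hU0 σ hσ) (huv σ hσ)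
  convert hsum.congr_of_eventuallyEq hMHat using 1
  linear_combination I / 2 * exp_mul_tsum_shadowTerm_eq_gUnary a b τ

theorem xi_MHat_eq_shadow_general (hU : IsOpen U) (hU0 : ∀ τ ∈ U, 0 < τ.im)
    (hu : DifferentiableOn ℂ u U) (hv : DifferentiableOn ℂ v U)
    (huv : ∀ τ ∈ U, u τ - v τ = a * τ - b)
    (hulat : ∀ τ ∈ U, ∀ m n : ℤ, u τ ≠ m * τ + n) (hvlat : ∀ τ ∈ U, ∀ m n : ℤ, v τ ≠ m * τ + n)
    (hτ : τ ∈ U) :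
    2 * I * √τ.im * conj (1 / 2 * (deriv (fun t : ℝ => MHat a b u v (τ + t)) 0 +
        I * deriv (fun t : ℝ => MHat a b u v (τ + t * I)) 0)) =
      conj (gUnary (a + 1 / 2) (b + 1 / 2) (-conj τ)) := by
  have hsqrt : (√τ.im : ℂ) ≠ 0 := by exact_mod_cast (Real.sqrt_pos.mpr (hU0 τ hτ)).ne'
  rw [(hasWirtingerBarDerivAt_MHat hU hU0 hu hv huv hulat hvlat
    hτ).half_mul_deriv_add_I_mul_deriv, map_mul, map_div₀, map_mul, conj_I, conj_ofReal, map_ofNat]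
  generalize conj (gUnary (a + 1 / 2) (b + 1 / 2) (-conj τ)) = g
  field_simp
  linear_combination -g * I_sq

end Shadow

/-- Proposition 2.8(i): `ξ_{1/2}(M̂_{a,b})(τ) = g^c_{a+1/2,b+1/2}(τ)`, where the weight-1/2
ξ-operator is expressed via the Wirtinger derivative `∂/∂τ̄ = (1/2)(∂/∂x + i ∂/∂y)`. -/
theorem xi_MHat_eq_shadow (a b : ℝ) (u v : ℂ → ℂ)
    (hu : DifferentiableOn ℂ u {z : ℂ | 0 < z.im})
    (hv : DifferentiableOn ℂ v {z : ℂ | 0 < z.im})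
    (huv : ∀ τ : ℂ, 0 < τ.im → u τ - v τ = (a : ℂ) * τ - (b : ℂ))
    (hulat : ∀ τ : ℂ, 0 < τ.im → ∀ m n : ℤ, u τ ≠ (m : ℂ) * τ + (n : ℂ))
    (hvlat : ∀ τ : ℂ, 0 < τ.im → ∀ m n : ℤ, v τ ≠ (m : ℂ) * τ + (n : ℂ)) :
    ∀ τ : ℂ, 0 < τ.im →
      2 * I * ((Real.sqrt τ.im : ℝ) : ℂ) *
        (starRingEnd ℂ) ((1/2 : ℂ) *
          (deriv (fun t : ℝ => MHat a b u v (τ + (t : ℂ))) 0 +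
            I * deriv (fun t : ℝ => MHat a b u v (τ + (t : ℂ) * I)) 0)) =
      (starRingEnd ℂ) (gUnary (a + 1/2) (b + 1/2) (-(starRingEnd ℂ) τ)) :=
  fun _ hτ => xi_MHat_eq_shadow_general (isOpen_lt continuous_const continuous_im) (fun _ => id)
    hu hv huv hulat hvlat hτ
end

section
/- Define V̂₁₁(τ) := −e^{−πiτ/16}·μ̂(τ/4 + 1/2, τ/2; τ) for τ ∈ ℍ. Let γ = (a b; c d) ∈ SL₂(ℤ) with a ≡ d ≡ 1 (mod 4), b ≡ 0 (mod 4), and c ≡ 0 (mod 2) (i.e., γ ∈ Γ¹(4) ∩ Γ₀(2)). Set k := (a−1)/4 + c/2, ℓ := b/4 + (d−1)/2, r := (a−1)/2, s := b/2, which are integers. Then for all τ ∈ ℍ: V̂₁₁(γτ)·η(γτ)³ = (−1)^{k+ℓ+r+s} · e( (4 − 4a − ab + 4c)/32 ) · (cτ+d)² · η(τ)³ · V̂₁₁(τ), where γτ = (aτ+b)/(cτ+d). (This is the modular transformation of the completion V̂₁₁ of Theorem 1.1 for (m,n) = (1,1), with the eta-multiplier ψ(γ)⁻³(cτ+d)^{1/2}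 absorbed by multiplying through by η(γτ)³ = ψ(γ)³(cτ+d)^{3/2}η(τ)³.) -/
open Complex

/-- The Dedekind eta function `η(τ) = e^{πiτ/12} ∏_{n≥1} (1 - e^{2πinτ})`. -/
noncomputable def dedekindEta (τ : ℂ) : ℂ :=
  Complex.exp ((Real.pi : ℂ) * I * τ / 12) *
    ∏' n : ℕ, (1 - Complex.exp (2 * (Real.pi : ℂ) * I * ((n : ℂ) + 1) * τ))

/-- `V̂₁₁(τ) = −e^{−πiτ/16} μ̂(τ/4 + 1/2, τ/2; τ)`. -/
noncomputable def Vhat11 (τ : ℂ) : ℂ :=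
  -Complex.exp (-(Real.pi : ℂ) * I * τ / 16) * muHat (τ/4 + 1/2) (τ/2) τ

/-! The sum `2 ϑ(v) μ̂(u, v)` is a series over `m`: the `m`-th Appell term plus the shadow terms
coming from `ϑ(v) R(u - v)` combine into a series with coefficients `sgn + E`, which Poisson
summation turns into a sum of Gaussian-damped reciprocals `e^{-π|z|²/2y}/z`. So `ϑ(v) μ̂(u, v)` is a
Kronecker–Eisenstein type sum over a coset of the lattice `ℤτ + ℤ`, and such a sum is covariant of
weight one under `SL₂(ℤ)` by permuting the lattice. At `(u, v) = (τ/4 + 1/2, τ/2)`, the quotient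
`ϑ(τ/2)/η³` is up to an exponential a Klein form, of weight `-1`. Hence `V̂₁₁ η³` is a quotient of
forms of weights `1` and `-1`, and only the two multipliers on the given group remain to be
computed. -/

open Filter Topology

/-- The exponential `e^{πix}`, the common normalisation of all theta and Appell summands. -/
noncomputable def expPi (x : ℂ) : ℂ := exp (Real.pi * I * x)

lemma expPi_ne_zero (x : ℂ) : expPi x ≠ 0 := exp_ne_zero _

lemma expPi_add (x y : ℂ) : expPi (x + y) = expPi x * expPi y := by
  rw [expPi, mul_add, exp_add, ← expPi, ← expPi]

lemma expPi_neg (x : ℂ) : expPi (-x) = (expPi x)⁻¹ := by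
  rw [expPi, mul_neg, exp_neg, ← expPi]

lemma expPi_one : expPi 1 = -1 := by rw [expPi, mul_one, exp_pi_mul_I]

lemma expPi_one_half : expPi (1 / 2) = I :=
  (congrArg exp (by ring)).trans exp_pi_div_two_mul_I

lemma expPi_int (n : ℤ) : expPi n = (-1) ^ n := by
  rw [← expPi_one, expPi, expPi, ← exp_int_mul]; ring_nf

lemma expPi_eq_of_eq_add {x y : ℂ} (n : ℤ) (h : x = y + 2 * n) : expPi x = expPi y := by
  have hn : expPi (2 * n) = 1 := exp_eq_one_iff.2 ⟨n, by ring⟩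
  rw [h, expPi_add, hn, mul_one]

lemma norm_expPi (x : ℂ) : ‖expPi x‖ = Real.exp (-(Real.pi * x.im)) := by
  simp [expPi, norm_exp]

/-! ### Theta series and the eta function -/

lemma jacobiTheta₂_term_eq_expPi (n : ℤ) (z τ : ℂ) :
    jacobiTheta₂_term n z τ = expPi (2 * n * z + n ^ 2 * τ) := by
  unfold jacobiTheta₂_term expPi; ring_nf

lemma hasSum_jacobiTheta₂ (z : ℂ) {τ : ℂ} (hτ : 0 < τ.im) :
    HasSum (fun n : ℤ ↦ expPi (2 * n * z + n ^ 2 * τ)) (jacobiTheta₂ z τ) := by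
  simpa only [jacobiTheta₂_term_eq_expPi] using hasSum_jacobiTheta₂_term z hτ

lemma jacobiTheta₂_add_tau (z τ : ℂ) :
    jacobiTheta₂ (z + τ) τ = expPi (-(τ + 2 * z)) * jacobiTheta₂ z τ := by
  rw [jacobiTheta₂_add_left', expPi]; ring_nf

lemma jacobiTheta₂_tau_add_one (z τ : ℂ) :
    jacobiTheta₂ z (τ + 1) = jacobiTheta₂ (z - 1 / 2) τ := by
  refine tsum_congr fun n ↦ ?_
  obtain ⟨k, hk⟩ := Int.even_mul_pred_self n
  have hk' : (n : ℂ) * (n - 1) = k + k := by exact_mod_cast hk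
  rw [jacobiTheta₂_term_eq_expPi, jacobiTheta₂_term_eq_expPi]
  exact expPi_eq_of_eq_add (n + k) (by push_cast; linear_combination hk')

/-- The index change `(m, n) = (r + s, r - s)` or `(r + s + 1, r - s)`, according to the parity of
`m + n`, which turns a product of two theta series at `τ` into theta series at `2τ`. -/
def thetaPairIndex : (ℤ × ℤ) ⊕ (ℤ × ℤ) → ℤ × ℤ
  | .inl (r, s) => (r + s, r - s)
  | .inr (r, s) => (r + s + 1, r - s)

lemma thetaPairIndex_bijective : Function.Bijective thetaPairIndex := by
  constructor
  · rintro (⟨r, s⟩ | ⟨r, s⟩) (⟨r', s'⟩ | ⟨r', s'⟩) h <;>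
      simp only [thetaPairIndex, Prod.mk.injEq, Sum.inl.injEq, Sum.inr.injEq, reduceCtorEq]
        at h ⊢ <;>
      omega
  · rintro ⟨m, n⟩
    obtain ⟨k, hk | hk⟩ := Int.even_or_odd' (m + n)
    · exact ⟨.inl (k, k - n), by simp only [thetaPairIndex, Prod.mk.injEq]; omega⟩
    · exact ⟨.inr (k, k - n), by simp only [thetaPairIndex, Prod.mk.injEq]; omega⟩

lemma hasSum_mul_prod {f g : ℤ → ℂ} {a b : ℂ} (hf : HasSum f a) (hg : HasSum g b) :
    HasSum (fun x : ℤ × ℤ ↦ f x.1 * g x.2) (a * b) :=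
  hf.mul hg (summable_mul_of_summable_norm hf.summable.norm hg.summable.norm)

theorem jacobiTheta₂_mul_jacobiTheta₂ (z w : ℂ) {τ : ℂ} (hτ : 0 < τ.im) :
    jacobiTheta₂ z τ * jacobiTheta₂ w τ =
      jacobiTheta₂ (z + w) (2 * τ) * jacobiTheta₂ (z - w) (2 * τ) +
      expPi (2 * z + τ) *
        (jacobiTheta₂ (z + w + τ) (2 * τ) * jacobiTheta₂ (z - w + τ) (2 * τ)) := by
  have h2τ : 0 < (2 * τ).im := by simpa using hτ
  have hprod := hasSum_mul_prod (hasSum_jacobiTheta₂ z hτ) (hasSum_jacobiTheta₂ w hτ)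
  have heven := hasSum_mul_prod (hasSum_jacobiTheta₂ (z + w) h2τ) (hasSum_jacobiTheta₂ (z - w) h2τ)
  have hodd := (hasSum_mul_prod (hasSum_jacobiTheta₂ (z + w + τ) h2τ)
    (hasSum_jacobiTheta₂ (z - w + τ) h2τ)).mul_left (expPi (2 * z + τ))
  refine ((Equiv.ofBijective _ thetaPairIndex_bijective).hasSum_iff.2 hprod).unique
    (HasSum.sum ?_ ?_)
  · refine heven.congr_fun fun ⟨r, s⟩ ↦ ?_
    simp only [Function.comp_apply, Equiv.ofBijective_apply, thetaPairIndex, ← expPi_add]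
    congr 1; push_cast; ring
  · refine hodd.congr_fun fun ⟨r, s⟩ ↦ ?_
    simp only [Function.comp_apply, Equiv.ofBijective_apply, thetaPairIndex, ← expPi_add]
    congr 1; push_cast; ring

lemma jacobiTheta₂_half_period (τ : ℂ) : jacobiTheta₂ (1 / 2 + τ / 2) τ = 0 := by
  have h : jacobiTheta₂ (1 / 2 + τ / 2) τ = -jacobiTheta₂ (1 / 2 + τ / 2) τ :=
    calc jacobiTheta₂ (1 / 2 + τ / 2) τ
        = jacobiTheta₂ (-(1 / 2 + τ / 2) + 1 + τ) τ := by ring_nf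
      _ = expPi (-1) * jacobiTheta₂ (1 / 2 + τ / 2) τ := by
          rw [jacobiTheta₂_add_tau, jacobiTheta₂_add_left, jacobiTheta₂_neg_left]; ring_nf
      _ = -jacobiTheta₂ (1 / 2 + τ / 2) τ := by rw [expPi_neg, expPi_one]; ring
  exact self_eq_neg.1 h

theorem jacobiTheta₂_landen {τ : ℂ} (hτ : 0 < τ.im) :
    jacobiTheta₂ (1 / 2) (2 * τ) ^ 2 = jacobiTheta₂ (1 / 2) τ * jacobiTheta₂ 0 τ := by
  have hzero : jacobiTheta₂ (1 / 2 + τ) (2 * τ) = 0 := by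
    rw [← jacobiTheta₂_half_period (2 * τ), mul_div_cancel_left₀ _ two_ne_zero]
  rw [jacobiTheta₂_mul_jacobiTheta₂ _ _ hτ, add_zero, sub_zero, hzero]
  ring

lemma jacobiTheta₂_half_eq_jacobiTheta (τ : ℂ) :
    jacobiTheta₂ (1 / 2) τ = jacobiTheta (τ + 1) := by
  rw [jacobiTheta_eq_jacobiTheta₂, jacobiTheta₂_tau_add_one, zero_sub, jacobiTheta₂_neg_left]

lemma tendsto_jacobiTheta_im_atTop :
    Tendsto jacobiTheta (comap im atTop) (𝓝 1) := by
  have hexp : Tendsto (fun τ : ℂ ↦ Real.exp (-Real.pi * τ.im)) (comap im atTop) (𝓝 0) :=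
    Real.tendsto_exp_atBot.comp
      (tendsto_comap.const_mul_atTop_of_neg (neg_lt_zero.2 Real.pi_pos))
  simpa using (isBigO_at_im_infty_jacobiTheta_sub_one.trans_tendsto hexp).add_const 1

-- By Landen's transformation a zero at `τ` propagates to `2ᵏτ`, where the theta series tends to 1.
theorem jacobiTheta₂_half_ne_zero {τ : ℂ} (hτ : 0 < τ.im) : jacobiTheta₂ (1 / 2) τ ≠ 0 := by
  intro h0
  have him (k : ℕ) : (2 ^ k * τ).im = 2 ^ k * τ.im := by
    rw [← im_ofReal_mul]; push_cast; rfl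
  have hzero (k : ℕ) : jacobiTheta₂ (1 / 2) (2 ^ k * τ) = 0 := by
    induction k with
    | zero => simpa using h0
    | succ k ih =>
      have hk : 0 < (2 ^ k * τ).im := by rw [him]; positivity
      rw [pow_succ', mul_assoc, ← sq_eq_zero_iff, jacobiTheta₂_landen hk, ih, zero_mul]
  have him_atTop : Tendsto (fun k : ℕ ↦ (2 ^ k * τ + 1).im) atTop atTop := by
    simp only [add_im, him, one_im, add_zero]
    exact (tendsto_pow_atTop_atTop_of_one_lt one_lt_two).atTop_mul_const hτ
  have hlim := tendsto_jacobiTheta_im_atTop.comp (tendsto_comap_iff.2 him_atTop)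
  simp only [Function.comp_def, ← jacobiTheta₂_half_eq_jacobiTheta, hzero] at hlim
  exact zero_ne_one (tendsto_nhds_unique tendsto_const_nhds hlim)

lemma jacobiThetaZw_eq_jacobiTheta₂ (v τ : ℂ) :
    jacobiThetaZw v τ = expPi (v + 1 / 2 + τ / 4) * jacobiTheta₂ (v + 1 / 2 + τ / 2) τ := by
  rw [jacobiThetaZw, jacobiTheta₂, ← tsum_mul_left]
  refine tsum_congr fun n ↦ ?_
  rw [jacobiTheta₂_term_eq_expPi, ← expPi_add, ← exp_add, expPi]
  ring_nf

lemma jacobiThetaZw_add_one (v τ : ℂ) : jacobiThetaZw (v + 1) τ = -jacobiThetaZw v τ := by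
  rw [jacobiThetaZw_eq_jacobiTheta₂, jacobiThetaZw_eq_jacobiTheta₂,
    show v + 1 + 1 / 2 + τ / 2 = v + 1 / 2 + τ / 2 + 1 by ring, jacobiTheta₂_add_left,
    show v + 1 + 1 / 2 + τ / 4 = v + 1 / 2 + τ / 4 + 1 by ring, expPi_add _ 1, expPi_one]
  ring

lemma jacobiThetaZw_add_tau (v τ : ℂ) :
    jacobiThetaZw (v + τ) τ = expPi (1 - τ - 2 * v) * jacobiThetaZw v τ := by
  rw [jacobiThetaZw_eq_jacobiTheta₂, jacobiThetaZw_eq_jacobiTheta₂,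
    show v + τ + 1 / 2 + τ / 2 = v + 1 / 2 + τ / 2 + τ by ring, jacobiTheta₂_add_tau,
    ← mul_assoc, ← mul_assoc, ← expPi_add, ← expPi_add]
  congr 1
  exact expPi_eq_of_eq_add (-1) (by push_cast; ring)

lemma jacobiThetaZw_tau_add_one (v τ : ℂ) :
    jacobiThetaZw v (τ + 1) = expPi (1 / 4) * jacobiThetaZw v τ := by
  rw [jacobiThetaZw_eq_jacobiTheta₂, jacobiThetaZw_eq_jacobiTheta₂, jacobiTheta₂_tau_add_one,
    ← mul_assoc, ← expPi_add]
  ring_nf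

lemma ne_zero_of_im_pos {τ : ℂ} (hτ : 0 < τ.im) : τ ≠ 0 := by
  rintro rfl
  exact hτ.ne rfl

lemma neg_I_mul_cpow_ne_zero {τ : ℂ} (hτ : 0 < τ.im) : (-I * τ) ^ (1 / 2 : ℂ) ≠ 0 := by
  simp [cpow_eq_zero_iff, ne_zero_of_im_pos hτ]

lemma jacobiThetaZw_neg_inv (v : ℂ) {τ : ℂ} (hτ : 0 < τ.im) :
    jacobiThetaZw (v / τ) (-1 / τ) =
      -I * (-I * τ) ^ (1 / 2 : ℂ) * (expPi (v ^ 2 / τ) * jacobiThetaZw v τ) := by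
  have h0 : τ ≠ 0 := ne_zero_of_im_pos hτ
  have hI : -I = expPi (-(1 / 2)) := by rw [expPi_neg, expPi_one_half, inv_I]
  rw [jacobiThetaZw_eq_jacobiTheta₂, jacobiThetaZw_eq_jacobiTheta₂,
    show v + 1 / 2 + τ / 2 = v - 1 / 2 + τ / 2 + 1 by ring, jacobiTheta₂_add_left,
    jacobiTheta₂_functional_equation (v - 1 / 2 + τ / 2) τ,
    show (v - 1 / 2 + τ / 2) / τ = v / τ + 1 / 2 + -1 / τ / 2 by field_simp; ring]
  generalize jacobiTheta₂ (v / τ + 1 / 2 + -1 / τ / 2) (-1 / τ) = J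
  have hexp : exp (-Real.pi * I * (v - 1 / 2 + τ / 2) ^ 2 / τ) =
      expPi (-(v - 1 / 2 + τ / 2) ^ 2 / τ) := congrArg exp (by ring)
  rw [hexp]
  calc expPi (v / τ + 1 / 2 + -1 / τ / 4) * J
      = expPi (-(1 / 2)) * expPi (v ^ 2 / τ) * expPi (v + 1 / 2 + τ / 4) *
          expPi (-(v - 1 / 2 + τ / 2) ^ 2 / τ) * J := by
        simp only [← expPi_add]
        congr 2
        field_simp
        ring
    _ = _ := by
        rw [← hI]
        field_simp

lemma dedekindEta_eq_eta (τ : ℂ) : dedekindEta τ = ModularForm.eta τ := by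
  unfold dedekindEta ModularForm.eta
  congr 1
  · exact congrArg exp (by push_cast; ring)
  · simp only [ModularForm.eta_q_eq_cexp]

lemma dedekindEta_ne_zero {τ : ℂ} (hτ : 0 < τ.im) : dedekindEta τ ≠ 0 := by
  rw [dedekindEta_eq_eta]
  exact ModularForm.eta_ne_zero hτ

lemma dedekindEta_add_one (τ : ℂ) :
    dedekindEta (τ + 1) = expPi (1 / 12) * dedekindEta τ := by
  have hprod (n : ℕ) : exp (2 * Real.pi * I * (n + 1) * (τ + 1)) =
      exp (2 * Real.pi * I * (n + 1) * τ) := by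
    rw [exp_eq_exp_iff_exists_int]
    exact ⟨n + 1, by push_cast; ring⟩
  simp only [dedekindEta, hprod, expPi, ← mul_assoc, ← exp_add]
  ring_nf

lemma csqrt_eq_neg_I_mul_cpow_mul {τ : ℂ} (hτ : 0 < τ.im) :
    sqrt τ = (-I * τ) ^ (1 / 2 : ℂ) * sqrt I := by
  have h0 : τ ≠ 0 := ne_zero_of_im_pos hτ
  have hI0 : -I * τ ≠ 0 := by simp [h0]
  have harg : |(-I * τ).arg| < Real.pi / 2 := by
    rw [abs_arg_lt_pi_div_two_iff]; left; simpa using hτ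
  rw [abs_lt] at harg
  have hlog : log τ = log (-I * τ) + log I := by
    rw [← log_mul hI0 I_ne_zero ⟨by rw [arg_I]; linarith, by rw [arg_I]; linarith⟩]
    congr 1
    linear_combination τ * I_sq
  rw [sqrt_eq_exp h0, sqrt_eq_exp I_ne_zero, cpow_def_of_ne_zero hI0, hlog, ← exp_add]
  ring_nf

lemma dedekindEta_neg_inv {τ : ℂ} (hτ : 0 < τ.im) :
    dedekindEta (-1 / τ) = (-I * τ) ^ (1 / 2 : ℂ) * dedekindEta τ := by
  have hI : sqrt I ≠ 0 := by rw [sqrt_eq_exp I_ne_zero]; exact exp_ne_zero _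
  have h := ModularForm.eta_comp_eq_csqrt_I_inv hτ
  simp only [Function.comp_apply, Pi.smul_apply, Pi.mul_apply, smul_eq_mul] at h
  rw [dedekindEta_eq_eta, dedekindEta_eq_eta, h, csqrt_eq_neg_I_mul_cpow_mul hτ]
  field_simp

/-! ### Klein forms -/

open UpperHalfPlane hiding I
open Matrix MatrixGroups ModularForm

/-- The Klein form with characteristic `v = (p, q)`, up to the constant `-2π`: the theta function
at `z = pτ + q`, made elliptic by the factor `e^{πipz}` and divided by `η³`. -/
noncomputable def kleinForm (v : Fin 2 → ℂ) (τ : ℍ) : ℂ :=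
  expPi (v 0 * (v 0 * τ + v 1)) * jacobiThetaZw (v 0 * τ + v 1) τ / dedekindEta τ ^ 3

lemma kleinForm_vadd_one (v : Fin 2 → ℂ) (τ : ℍ) :
    kleinForm v ((1 : ℝ) +ᵥ τ) = kleinForm ![v 0, v 0 + v 1] τ := by
  have hη : expPi (1 / 12) ^ 3 = expPi (1 / 4) := by
    rw [expPi, ← exp_nat_mul]; exact congrArg exp (by push_cast; ring)
  simp only [kleinForm, coe_vadd, ofReal_one, add_comm (1 : ℂ), jacobiThetaZw_tau_add_one,
    dedekindEta_add_one, mul_pow, hη, cons_val_zero, cons_val_one]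
  rw [show v 0 * (τ + 1) + v 1 = v 0 * τ + (v 0 + v 1) by ring, mul_left_comm,
    mul_div_mul_left _ _ (expPi_ne_zero _)]

lemma kleinForm_S_smul (v : Fin 2 → ℂ) (τ : ℍ) :
    τ * kleinForm v (ModularGroup.S • τ) = kleinForm ![v 1, -v 0] τ := by
  have h0 := τ.ne_zero
  have hη := dedekindEta_ne_zero τ.im_pos
  have hA := neg_I_mul_cpow_ne_zero τ.im_pos
  have hA2 : ((-I * τ) ^ (1 / 2 : ℂ)) ^ 2 = -I * τ := by
    rw [← cpow_nat_mul]; simp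
  have hS : ((ModularGroup.S • τ : ℍ) : ℂ) = -1 / τ := by
    rw [modular_S_smul]
    simp [neg_div, inv_neg]
  have hz : v 0 * (-1 / τ) + v 1 = (v 1 * τ - v 0) / τ := by field_simp; ring
  simp only [kleinForm, hS, hz, jacobiThetaZw_neg_inv _ τ.im_pos, dedekindEta_neg_inv τ.im_pos,
    cons_val_zero, cons_val_one, ← sub_eq_add_neg]
  generalize (-I * τ : ℂ) ^ (1 / 2 : ℂ) = A at hA hA2 ⊢
  have hexp : expPi (v 1 * (v 1 * τ - v 0)) =
      expPi (v 0 * ((v 1 * τ - v 0) / τ)) * expPi ((v 1 * τ - v 0) ^ 2 / τ) := by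
    rw [← expPi_add]; congr 1; field_simp; ring
  rw [hexp, mul_pow, pow_succ A 2, hA2]
  field_simp

theorem kleinForm_slash (v : Fin 2 → ℂ) (g : SL(2, ℤ)) :
    kleinForm v ∣[(-1 : ℤ)] g =
      kleinForm (v ᵥ* (Int.castRingHom ℂ).mapMatrix (g : Matrix (Fin 2) (Fin 2) ℤ)) := by
  have hg : g ∈ Subgroup.closure {ModularGroup.S, ModularGroup.T} := by
    simp [SpecialLinearGroup.SL2Z_generators]
  induction hg using Subgroup.closure_induction generalizing v with
  | mem x hx =>
    ext τ
    rw [SL_slash_apply, neg_neg, zpow_one]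
    rcases hx with rfl | rfl
    · rw [ModularGroup.denom_S, mul_comm, kleinForm_S_smul]
      congr 1
      ext i
      fin_cases i <;> simp [ModularGroup.S, vecMul, dotProduct]
    · rw [modular_T_smul, kleinForm_vadd_one, ModularGroup.denom_apply]
      have hv : v ᵥ* (Int.castRingHom ℂ).mapMatrix
          (ModularGroup.T : Matrix (Fin 2) (Fin 2) ℤ) = ![v 0, v 0 + v 1] := by
        ext i
        fin_cases i <;> simp [ModularGroup.T, vecMul, dotProduct]
      rw [hv]
      simp [ModularGroup.T]
  | one => simp [SlashAction.slash_one]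
  | mul x y _ _ ihx ihy =>
    rw [SlashAction.slash_mul, ihx, ihy, vecMul_vecMul, ← map_mul]
    rfl
  | inv x _ ih =>
    have h := ih (v ᵥ* (Int.castRingHom ℂ).mapMatrix
      ((x⁻¹ : SL(2, ℤ)) : Matrix (Fin 2) (Fin 2) ℤ))
    have hx1 : ((x⁻¹ : SL(2, ℤ)) : Matrix (Fin 2) (Fin 2) ℤ) * x = 1 :=
      congrArg Subtype.val (inv_mul_cancel x)
    rw [vecMul_vecMul, ← map_mul, hx1, map_one, vecMul_one] at h
    rw [← h, ← SlashAction.slash_mul, mul_inv_cancel, SlashAction.slash_one]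

lemma kleinForm_add_one_left (p q : ℂ) (τ : ℍ) :
    kleinForm ![p + 1, q] τ = expPi (-(q + 1)) * kleinForm ![p, q] τ := by
  simp only [kleinForm, cons_val_zero, cons_val_one]
  rw [show (p + 1) * τ + q = p * τ + q + τ by ring, jacobiThetaZw_add_tau, ← mul_assoc, ← expPi_add,
    ← mul_div_assoc, ← mul_assoc, ← expPi_add]
  congr 2
  exact expPi_eq_of_eq_add 1 (by push_cast; ring)

lemma kleinForm_add_one_right (p q : ℂ) (τ : ℍ) :
    kleinForm ![p, q + 1] τ = expPi (p + 1) * kleinForm ![p, q] τ := by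
  simp only [kleinForm, cons_val_zero, cons_val_one]
  rw [← add_assoc, jacobiThetaZw_add_one, mul_add p, mul_one, expPi_add, expPi_add p, expPi_one]
  ring

lemma kleinForm_add_int_left (p q : ℂ) (m : ℤ) (τ : ℍ) :
    kleinForm ![p + m, q] τ = expPi (-(m * (q + 1))) * kleinForm ![p, q] τ := by
  have hperiodic : Function.Periodic (fun p ↦ expPi (p * (q + 1)) * kleinForm ![p, q] τ) 1 := by
    intro p
    simp only [kleinForm_add_one_left, ← mul_assoc, ← expPi_add]
    ring_nf
  have h := hperiodic.int_mul m p
  simp only [mul_one, add_mul, expPi_add, mul_assoc] at h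
  rw [expPi_neg, eq_inv_mul_iff_mul_eq₀ (expPi_ne_zero _)]
  exact mul_left_cancel₀ (expPi_ne_zero _) h

lemma kleinForm_add_int_right (p q : ℂ) (n : ℤ) (τ : ℍ) :
    kleinForm ![p, q + n] τ = expPi (n * (p + 1)) * kleinForm ![p, q] τ := by
  have hperiodic : Function.Periodic (fun q ↦ expPi (-(q * (p + 1))) * kleinForm ![p, q] τ) 1 := by
    intro q
    simp only [kleinForm_add_one_right, ← mul_assoc, ← expPi_add]
    ring_nf
  have h := hperiodic.int_mul n q
  simp only [mul_one, add_mul, neg_add, expPi_add, mul_assoc] at h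
  rw [← inv_mul_eq_iff_eq_mul₀ (expPi_ne_zero _), ← expPi_neg]
  exact mul_left_cancel₀ (expPi_ne_zero _) h

lemma jacobiThetaZw_half_period (τ : ℂ) :
    jacobiThetaZw (τ / 2) τ = -I * expPi (-(τ / 4)) * jacobiTheta₂ (1 / 2) τ := by
  have hI : -I = expPi (-(1 / 2)) := by rw [expPi_neg, expPi_one_half, inv_I]
  rw [jacobiThetaZw_eq_jacobiTheta₂, show τ / 2 + 1 / 2 + τ / 2 = 1 / 2 + τ by ring,
    jacobiTheta₂_add_tau, ← mul_assoc, ← expPi_add, hI, ← expPi_add]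
  congr 1
  exact congrArg expPi (by ring)

lemma jacobiThetaZw_half_period_ne_zero {τ : ℂ} (hτ : 0 < τ.im) : jacobiThetaZw (τ / 2) τ ≠ 0 := by
  rw [jacobiThetaZw_half_period]
  exact mul_ne_zero (mul_ne_zero (neg_ne_zero.2 I_ne_zero) (expPi_ne_zero _))
    (jacobiTheta₂_half_ne_zero hτ)

lemma kleinForm_half_zero (τ : ℍ) :
    kleinForm ![1 / 2, 0] τ =
      expPi (τ / 4) * jacobiThetaZw (τ / 2) τ / dedekindEta τ ^ 3 := by
  simp only [kleinForm, cons_val_zero, cons_val_one]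
  ring_nf

theorem kleinForm_half_zero_slash {g : SL(2, ℤ)} {k β : ℤ} (ha : g 0 0 = 1 + 4 * k)
    (hb : g 0 1 = 4 * β) :
    kleinForm ![1 / 2, 0] ∣[(-1 : ℤ)] g = expPi β • kleinForm ![1 / 2, 0] := by
  have hv : ![1 / 2, 0] ᵥ* (Int.castRingHom ℂ).mapMatrix (g : Matrix (Fin 2) (Fin 2) ℤ) =
      ![1 / 2 + ((2 * k : ℤ) : ℂ), 0 + ((2 * β : ℤ) : ℂ)] := by
    ext i
    fin_cases i
    · simp only [vecMul, dotProduct, Fin.zero_eta, RingHom.mapMatrix_apply, Int.coe_castRingHom,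
        map_apply, Fin.sum_univ_two, cons_val_zero, cons_val_one, cons_val_fin_one, ha]
      push_cast
      ring
    · simp only [vecMul, dotProduct, Fin.mk_one, RingHom.mapMatrix_apply, Int.coe_castRingHom,
        map_apply, Fin.sum_univ_two, cons_val_zero, cons_val_one, cons_val_fin_one, hb]
      push_cast
      ring
  ext τ
  rw [kleinForm_slash, hv, kleinForm_add_int_left, kleinForm_add_int_right, ← mul_assoc,
    ← expPi_add, Pi.smul_apply, smul_eq_mul]
  congr 1
  exact expPi_eq_of_eq_add (β - k - 2 * k * β) (by push_cast; ring)

/-! ### A nonholomorphic Eisenstein series of weight one -/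

/-- The Gaussian-damped reciprocal `e^{-π|z|²/2y}/z` of the lattice vector `z = pτ + q`, where
`y = Im τ`; summed over lattice cosets it gives nonholomorphic Eisenstein series of weight one. -/
noncomputable def gaussRecip (p q : ℝ) (τ : ℍ) : ℂ :=
  Real.exp (-(Real.pi * normSq (p * τ + q) / (2 * τ.im))) / (p * τ + q)

theorem gaussRecip_slash (p q : ℝ) (g : SL(2, ℤ)) :
    gaussRecip p q ∣[(1 : ℤ)] g =
      gaussRecip (p * g 0 0 + q * g 1 0) (p * g 0 1 + q * g 1 1) := by
  ext τ
  have hdenom : (g 1 0 * τ + g 1 1 : ℂ) ≠ 0 := by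
    rw [← ModularGroup.denom_apply]
    exact denom_ne_zero _ _
  have hnormSq : normSq (g 1 0 * τ + g 1 1) ≠ 0 := normSq_eq_zero.not.2 hdenom
  have hz : p * ((g • τ : ℍ) : ℂ) + q =
      ((p * g 0 0 + q * g 1 0 : ℝ) * τ + (p * g 0 1 + q * g 1 1 : ℝ)) / (g 1 0 * τ + g 1 1) := by
    rw [coe_specialLinearGroup_apply, eq_div_iff hdenom]
    simp only [algebraMap_int_eq, eq_intCast, ofReal_intCast]
    rw [add_mul, mul_assoc, div_mul_cancel₀ _ hdenom]
    push_cast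
    ring
  rw [SL_slash_apply, gaussRecip, gaussRecip, hz, ModularGroup.im_smul_eq_div_normSq,
    ModularGroup.denom_apply, map_div₀, _root_.zpow_neg_one]
  generalize (↑(p * g 0 0 + q * g 1 0) * τ + ↑(p * g 0 1 + q * g 1 1) : ℂ) = z
  rw [show Real.pi * (normSq z / normSq (g 1 0 * τ + g 1 1)) /
    (2 * (τ.im / normSq (g 1 0 * τ + g 1 1))) = Real.pi * normSq z / (2 * τ.im) by field_simp]
  field_simp

lemma summable_gaussian_int_add {t : ℝ} (ht : 0 < t) (α : ℝ) :
    Summable fun n : ℤ ↦ Real.exp (-Real.pi * (n + α) ^ 2 * t) :=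
  (HurwitzZeta.hasSum_int_evenKernel α ht).summable

lemma exists_sq_add_sq_le_mul_normSq (τ : ℍ) :
    ∃ K > 0, ∀ p q : ℝ, p ^ 2 + q ^ 2 ≤ K * normSq (p * τ + q) := by
  refine ⟨2 + (1 + 2 * τ.re ^ 2) / τ.im ^ 2, by positivity, fun p q ↦ ?_⟩
  have hnormSq : normSq (p * τ + q) = (p * τ.re + q) ^ 2 + (p * τ.im) ^ 2 := by
    simp [normSq_apply, sq]
  have hp : (1 + 2 * τ.re ^ 2) / τ.im ^ 2 * (p * τ.im) ^ 2 = (1 + 2 * τ.re ^ 2) * p ^ 2 := by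
    field_simp
  have hnonneg : 0 ≤ (1 + 2 * τ.re ^ 2) / τ.im ^ 2 * (p * τ.re + q) ^ 2 := by positivity
  rw [hnormSq]
  nlinarith [sq_nonneg (2 * p * τ.re + q), sq_nonneg (p * τ.im)]

lemma summable_gaussian_lattice (α β : ℝ) (τ : ℍ) :
    Summable fun x : ℤ × ℤ ↦
      Real.exp (-(Real.pi * normSq ((x.1 + α : ℝ) * τ + (x.2 + β : ℝ)) / (2 * τ.im))) := by
  obtain ⟨K, hK, hbound⟩ := exists_sq_add_sq_le_mul_normSq τ
  have ht : 0 < (2 * τ.im * K)⁻¹ := by positivity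
  refine .of_nonneg_of_le (fun _ ↦ Real.exp_nonneg _) (fun x ↦ ?_)
    ((summable_gaussian_int_add ht α).mul_of_nonneg (summable_gaussian_int_add ht β)
      (fun _ ↦ Real.exp_nonneg _) fun _ ↦ Real.exp_nonneg _)
  rw [← Real.exp_add, Real.exp_le_exp]
  have h := hbound (x.1 + α) (x.2 + β)
  generalize normSq _ = N at h ⊢
  calc -(Real.pi * N / (2 * τ.im))
      = -(Real.pi * (K * N)) * (2 * τ.im * K)⁻¹ := by field_simp
    _ ≤ -(Real.pi * ((x.1 + α) ^ 2 + (x.2 + β) ^ 2)) * (2 * τ.im * K)⁻¹ := by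
        gcongr
    _ = _ := by ring

lemma norm_gaussRecip_le {p q δ : ℝ} (hδ : 0 < δ) (hp : δ ≤ |p|) (τ : ℍ) :
    ‖gaussRecip p q τ‖ ≤
      (δ * τ.im)⁻¹ * Real.exp (-(Real.pi * normSq (p * τ + q) / (2 * τ.im))) := by
  have hz : δ * τ.im ≤ ‖(p * τ + q : ℂ)‖ :=
    calc δ * τ.im ≤ |p| * |τ.im| := by gcongr; exact le_abs_self _
      _ = |(p * τ + q : ℂ).im| := by simp [abs_mul]
      _ ≤ _ := abs_im_le_norm _
  rw [gaussRecip, norm_div, norm_real, Real.norm_of_nonneg (Real.exp_nonneg _), div_eq_inv_mul]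
  gcongr

theorem summable_gaussRecip {α : ℝ} (hα : ∀ m : ℤ, (m : ℝ) ≠ α) (β : ℝ) (τ : ℍ) :
    Summable fun x : ℤ × ℤ ↦ ‖gaussRecip (x.1 + α) (x.2 + β) τ‖ := by
  refine .of_nonneg_of_le (fun _ ↦ norm_nonneg _) (fun x ↦ ?_)
    ((summable_gaussian_lattice α β τ).mul_left (|α - round α| * τ.im)⁻¹)
  refine norm_gaussRecip_le (abs_pos.2 (sub_ne_zero.2 (hα _).symm)) ?_ τ
  simpa [add_comm] using round_le α (-x.1)

/-- The affine permutation `x ↦ xγ + s` of the lattice `ℤ²` of row vectors. -/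
def latticeEquiv (g : SL(2, ℤ)) (s : ℤ × ℤ) : ℤ × ℤ ≃ ℤ × ℤ where
  toFun x := (x.1 * g 0 0 + x.2 * g 1 0 + s.1, x.1 * g 0 1 + x.2 * g 1 1 + s.2)
  invFun x := ((x.1 - s.1) * g 1 1 - (x.2 - s.2) * g 1 0,
    (x.2 - s.2) * g 0 0 - (x.1 - s.1) * g 0 1)
  left_inv x := by
    have hdet := (det_fin_two (g : Matrix (Fin 2) (Fin 2) ℤ)).symm.trans g.det_coe
    ext
    · linear_combination x.1 * hdet
    · linear_combination x.2 * hdet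
  right_inv x := by
    have hdet := (det_fin_two (g : Matrix (Fin 2) (Fin 2) ℤ)).symm.trans g.det_coe
    ext
    · linear_combination (x.1 - s.1) * hdet
    · linear_combination (x.2 - s.2) * hdet

/-- The weight one Eisenstein series over the coset `(1/4, 1/2) + ℤ²` with the quadratic phase
`e^{πipq}`. -/
noncomputable def quarterHalfSum (τ : ℍ) : ℂ :=
  ∑' x : ℤ × ℤ, expPi ((x.1 + 1 / 4) * (x.2 + 1 / 2)) * gaussRecip (x.1 + 1 / 4) (x.2 + 1 / 2) τ

lemma expPi_quarter_half_phase {a b c d β κ : ℤ} (hdet : a * d - b * c = 1)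
    (hb : b = 4 * β) (hc : c = 2 * κ) (m n : ℤ) :
    expPi ((m + 1 / 4) * (n + 1 / 2)) = expPi (-(a * b / 16 + c * d / 4)) *
      expPi (((m + 1 / 4) * a + (n + 1 / 2) * c) * ((m + 1 / 4) * b + (n + 1 / 2) * d)) := by
  rw [← expPi_add]
  refine expPi_eq_of_eq_add (-(2 * a * β * m ^ 2 + a * β * m +
    β * κ * (4 * m + 1) * (2 * n + 1) + κ * d * (n ^ 2 + n))) ?_
  have hdet' : (a : ℂ) * d - b * c = 1 := by exact_mod_cast hdet
  subst hb hc
  push_cast at hdet' ⊢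
  linear_combination -((m + 1 / 4 : ℂ) * (n + 1 / 2)) * hdet'

theorem quarterHalfSum_slash {g : SL(2, ℤ)} {k β κ δ : ℤ} (ha : g 0 0 = 1 + 4 * k)
    (hb : g 0 1 = 4 * β) (hc : g 1 0 = 2 * κ) (hd : g 1 1 = 1 + 4 * δ) :
    quarterHalfSum ∣[(1 : ℤ)] g =
      expPi (-(g 0 0 * g 0 1 / 16 + g 1 0 * g 1 1 / 4)) • quarterHalfSum := by
  have hdet := (det_fin_two (g : Matrix (Fin 2) (Fin 2) ℤ)).symm.trans g.det_coe
  ext τ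
  have hreindex : quarterHalfSum τ = _ :=
    ((latticeEquiv g (k + κ, β + 2 * δ)).tsum_eq _).symm
  rw [SL_slash_apply, Pi.smul_apply, smul_eq_mul, hreindex, quarterHalfSum, ← tsum_mul_right,
    ← tsum_mul_left]
  refine tsum_congr fun x ↦ ?_
  have hp : ((latticeEquiv g (k + κ, β + 2 * δ) x).1 : ℝ) + 1 / 4 =
      (x.1 + 1 / 4) * g 0 0 + (x.2 + 1 / 2) * g 1 0 := by
    simp only [latticeEquiv, Equiv.coe_fn_mk, ha, hc]
    push_cast
    ring
  have hq : ((latticeEquiv g (k + κ, β + 2 * δ) x).2 : ℝ) + 1 / 2 =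
      (x.1 + 1 / 4) * g 0 1 + (x.2 + 1 / 2) * g 1 1 := by
    simp only [latticeEquiv, Equiv.coe_fn_mk, hb, hd]
    push_cast
    ring
  have hslash := congrFun (gaussRecip_slash (x.1 + 1 / 4) (x.2 + 1 / 2) g) τ
  rw [SL_slash_apply] at hslash
  have hp' := congrArg ((↑) : ℝ → ℂ) hp
  have hq' := congrArg ((↑) : ℝ → ℂ) hq
  push_cast at hp' hq'
  rw [mul_assoc, hslash, hp, hq, hp', hq', expPi_quarter_half_phase hdet hb hc, mul_assoc]

/-! ### The error function and its Fourier transform -/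

open MeasureTheory

/-- Zwegers' `E(x) = 2∫₀ˣ e^{-πt²} dt`, the error function normalised to tend to `±1` at `±∞`. -/
noncomputable def zwegersE (x : ℝ) : ℝ := 2 * ∫ t in (0 : ℝ)..x, Real.exp (-Real.pi * t ^ 2)

lemma integrable_exp_neg_pi_mul_sq : Integrable fun t : ℝ ↦ Real.exp (-Real.pi * t ^ 2) :=
  integrable_exp_neg_mul_sq Real.pi_pos

lemma integral_exp_neg_pi_mul_sq_Ioi_zero :
    ∫ t in Set.Ioi (0 : ℝ), Real.exp (-Real.pi * t ^ 2) = 1 / 2 := by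
  rw [integral_gaussian_Ioi, div_self Real.pi_ne_zero, Real.sqrt_one]

lemma hasDerivAt_zwegersE (x : ℝ) :
    HasDerivAt zwegersE (2 * Real.exp (-Real.pi * x ^ 2)) x :=
  have hcont : Continuous fun t : ℝ ↦ Real.exp (-Real.pi * t ^ 2) := by fun_prop
  (intervalIntegral.integral_hasDerivAt_right (hcont.intervalIntegrable _ _)
    (hcont.stronglyMeasurableAtFilter _ _) hcont.continuousAt).const_mul 2

@[fun_prop]
lemma continuous_zwegersE : Continuous zwegersE :=
  continuous_iff_continuousAt.2 fun x ↦ (hasDerivAt_zwegersE x).continuousAt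

lemma zwegersE_neg (x : ℝ) : zwegersE (-x) = -zwegersE x := by
  have h := intervalIntegral.integral_comp_neg (a := 0) (b := x)
    fun t : ℝ ↦ Real.exp (-Real.pi * t ^ 2)
  simp only [neg_sq, neg_zero] at h
  rw [zwegersE, zwegersE, h, intervalIntegral.integral_symm, mul_neg]

lemma one_sub_zwegersE (x : ℝ) :
    1 - zwegersE x = 2 * ∫ t in Set.Ioi x, Real.exp (-Real.pi * t ^ 2) := by
  have h := intervalIntegral.integral_interval_add_Ioi (a := 0) (b := x)
    integrable_exp_neg_pi_mul_sq.integrableOn integrable_exp_neg_pi_mul_sq.integrableOn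
  rw [integral_exp_neg_pi_mul_sq_Ioi_zero] at h
  rw [zwegersE]
  linarith

lemma zwegersE_le_one (x : ℝ) : zwegersE x ≤ 1 := by
  have h : 0 ≤ ∫ t in Set.Ioi x, Real.exp (-Real.pi * t ^ 2) :=
    integral_nonneg fun _ ↦ Real.exp_nonneg _
  linarith [one_sub_zwegersE x]

lemma neg_one_le_zwegersE (x : ℝ) : -1 ≤ zwegersE x := by
  linarith [zwegersE_le_one (-x), zwegersE_neg x]

lemma one_sub_zwegersE_le {x : ℝ} (hx : 0 ≤ x) :
    1 - zwegersE x ≤ Real.exp (-Real.pi * x ^ 2) := by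
  have hshift : ∫ t in Set.Ioi x, Real.exp (-Real.pi * t ^ 2) =
      ∫ t in Set.Ioi (0 : ℝ), Real.exp (-Real.pi * (t + x) ^ 2) := by
    have h := (measurePreserving_add_right volume x).setIntegral_preimage_emb
      (measurableEmbedding_addRight x) (fun t ↦ Real.exp (-Real.pi * t ^ 2)) (Set.Ioi x)
    rw [Set.preimage_add_const_Ioi, sub_self] at h
    exact h.symm
  have hle : ∫ t in Set.Ioi (0 : ℝ), Real.exp (-Real.pi * (t + x) ^ 2) ≤
      ∫ t in Set.Ioi (0 : ℝ), Real.exp (-Real.pi * x ^ 2) * Real.exp (-Real.pi * t ^ 2) := by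
    refine setIntegral_mono_on (integrable_exp_neg_pi_mul_sq.comp_add_right x).integrableOn
      (integrable_exp_neg_pi_mul_sq.const_mul _).integrableOn measurableSet_Ioi fun t ht ↦ ?_
    have htx : 0 ≤ Real.pi * (t * x) := mul_nonneg Real.pi_pos.le (mul_nonneg (le_of_lt ht) hx)
    rw [← Real.exp_add, Real.exp_le_exp]
    linarith
  rw [integral_const_mul, integral_exp_neg_pi_mul_sq_Ioi_zero] at hle
  rw [one_sub_zwegersE, hshift]
  linarith

lemma one_add_zwegersE_le {x : ℝ} (hx : x ≤ 0) :
    1 + zwegersE x ≤ Real.exp (-Real.pi * x ^ 2) := by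
  simpa [zwegersE_neg] using one_sub_zwegersE_le (neg_nonneg.2 hx)

lemma abs_sign_sub_zwegersE_le {x : ℝ} (hx : x ≠ 0) :
    |Real.sign x - zwegersE x| ≤ Real.exp (-Real.pi * x ^ 2) := by
  rcases hx.lt_or_gt with hneg | hpos
  · rw [Real.sign_of_neg hneg, abs_le]
    constructor <;> linarith [one_add_zwegersE_le hneg.le, neg_one_le_zwegersE x,
      Real.exp_pos (-Real.pi * x ^ 2)]
  · rw [Real.sign_of_pos hpos, abs_le]
    constructor <;> linarith [one_sub_zwegersE_le hpos.le, zwegersE_le_one x,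
      Real.exp_pos (-Real.pi * x ^ 2)]

lemma one_add_zwegersE_le_exp_mul {b : ℝ} (hb : 0 ≤ b) (x : ℝ) :
    1 + zwegersE x ≤ 2 * (Real.exp (b ^ 2 / (4 * Real.pi)) * Real.exp (b * x)) := by
  rw [← Real.exp_add]
  rcases le_total 0 x with hx | hx
  · have hexp : 1 ≤ Real.exp (b ^ 2 / (4 * Real.pi) + b * x) := Real.one_le_exp (by positivity)
    linarith [zwegersE_le_one x]
  · have hsq : b ^ 2 / (4 * Real.pi) + b * x - -Real.pi * x ^ 2 =
        (b + 2 * Real.pi * x) ^ 2 / (4 * Real.pi) := by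
      field_simp
      ring
    have hnonneg : 0 ≤ (b + 2 * Real.pi * x) ^ 2 / (4 * Real.pi) := by positivity
    have hexp : Real.exp (-Real.pi * x ^ 2) ≤ Real.exp (b ^ 2 / (4 * Real.pi) + b * x) :=
      Real.exp_le_exp.2 (by linarith)
    linarith [one_add_zwegersE_le hx, Real.exp_pos (b ^ 2 / (4 * Real.pi) + b * x)]

/-- The exponential `x ↦ e^{2πizx}` damped at `-∞` by the factor `1 + E(x)`; for `Im z > 0` it
decays exponentially in both directions. -/
noncomputable def dampedExp (z : ℂ) (x : ℝ) : ℂ := expPi (2 * x * z) * ↑(1 + zwegersE x)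

@[fun_prop]
lemma continuous_dampedExp (z : ℂ) : Continuous (dampedExp z) := by
  unfold dampedExp expPi
  fun_prop

lemma norm_dampedExp_le {z : ℂ} (hz : 0 < z.im) (x : ℝ) :
    ‖dampedExp z x‖ ≤ 2 * Real.exp (4 * Real.pi * z.im ^ 2) *
      Real.exp (-(2 * Real.pi * z.im) * |x|) := by
  have him : (2 * (x : ℂ) * z).im = 2 * x * z.im := by simp
  rw [dampedExp, norm_mul, norm_expPi, him, Complex.norm_real,
    Real.norm_of_nonneg (by linarith [neg_one_le_zwegersE x])]
  rcases le_total 0 x with hx | hx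
  · rw [abs_of_nonneg hx, mul_comm]
    refine mul_le_mul ?_ (Real.exp_le_exp.2 (le_of_eq (by ring))) (Real.exp_nonneg _)
      (by positivity)
    linarith [zwegersE_le_one x, Real.one_le_exp (x := 4 * Real.pi * z.im ^ 2) (by positivity)]
  · have h := one_add_zwegersE_le_exp_mul (b := 4 * Real.pi * z.im) (by positivity) x
    refine (mul_le_mul_of_nonneg_left h (Real.exp_nonneg _)).trans_eq ?_
    rw [abs_of_nonpos hx, mul_left_comm, mul_assoc 2 (Real.exp _), ← Real.exp_add,
      ← Real.exp_add, ← Real.exp_add]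
    congr 2
    field_simp
    ring

lemma isBigO_dampedExp {z : ℂ} (hz : 0 < z.im) :
    dampedExp z =O[cocompact ℝ] fun x ↦ |x| ^ (-2 : ℝ) :=
  (Asymptotics.IsBigO.of_norm_le (norm_dampedExp_le hz)).trans <|
    ((isLittleO_exp_neg_mul_rpow_atTop (by positivity : 0 < 2 * Real.pi * z.im) (-2)).comp_tendsto
      tendsto_norm_cocompact_atTop).isBigO.const_mul_left _

lemma integrable_exp_neg_mul_abs {a : ℝ} (ha : 0 < a) :
    Integrable fun x : ℝ ↦ Real.exp (-a * |x|) := by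
  refine LocallyIntegrable.integrable_of_isBigO_atTop_of_norm_isNegInvariant
    (g := fun x ↦ Real.exp (-a * x))
    (by fun_prop : Continuous fun x : ℝ ↦ Real.exp (-a * |x|)).locallyIntegrable
    (Eventually.of_forall fun x ↦ by simp) (EventuallyEq.isBigO ?_)
    ⟨Set.Ioi 0, Ioi_mem_atTop 0, exp_neg_integrableOn_Ioi 0 ha⟩
  filter_upwards [eventually_ge_atTop 0] with x hx
  rw [abs_of_nonneg hx]

lemma integrable_dampedExp {z : ℂ} (hz : 0 < z.im) : Integrable (dampedExp z) :=
  ((integrable_exp_neg_mul_abs (by positivity)).const_mul _).mono'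
    (continuous_dampedExp z).aestronglyMeasurable (Eventually.of_forall (norm_dampedExp_le hz))

/-- The meromorphic function `z ↦ i e^{-πz²} / (πz)`, which interpolates the Fourier transform of
`dampedExp z`. -/
noncomputable def gaussPole (z : ℂ) : ℂ := I / (Real.pi * z) * cexp (-Real.pi * z ^ 2)

lemma gaussPole_neg (z : ℂ) : gaussPole (-z) = -gaussPole z := by
  rw [gaussPole, gaussPole, neg_sq, mul_neg, div_neg, neg_mul]

lemma integrable_expPi_mul_gaussian (z : ℂ) :
    Integrable fun x : ℝ ↦ ((2 * Real.exp (-Real.pi * x ^ 2) : ℝ) : ℂ) * expPi (2 * x * z) := by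
  have h := (integrable_cexp_quadratic' (b := -Real.pi) (by simpa using Real.pi_pos)
    (2 * Real.pi * I * z) 0).const_mul 2
  refine h.congr (Eventually.of_forall fun x ↦ ?_)
  simp only [expPi, ofReal_mul, ofReal_exp, mul_assoc, ← Complex.exp_add]
  push_cast
  ring_nf

lemma integral_expPi_mul_gaussian (z : ℂ) :
    ∫ x : ℝ, ((2 * Real.exp (-Real.pi * x ^ 2) : ℝ) : ℂ) * expPi (2 * x * z) =
      2 * cexp (-Real.pi * z ^ 2) := by
  have h := fourierIntegral_gaussian (b := Real.pi) (by simpa using Real.pi_pos) (2 * Real.pi * z)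
  have hpi : (Real.pi : ℂ) ≠ 0 := ofReal_ne_zero.2 Real.pi_ne_zero
  rw [div_self hpi, one_cpow, one_mul] at h
  have hexp : -(2 * Real.pi * z) ^ 2 / (4 * Real.pi) = -Real.pi * z ^ 2 := by
    field_simp
    ring
  rw [← hexp, ← h, ← integral_const_mul]
  refine integral_congr_ae (Eventually.of_forall fun x ↦ ?_)
  simp only [expPi, ofReal_mul, ofReal_exp]
  push_cast
  ring_nf

lemma integral_dampedExp {z : ℂ} (hz : 0 < z.im) : ∫ x, dampedExp z x = gaussPole z := by
  have hne : 2 * (Real.pi : ℂ) * I * z ≠ 0 := by simp [ne_zero_of_im_pos hz, Real.pi_ne_zero]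
  have hdamp (x : ℝ) : HasDerivAt (fun x ↦ ((1 + zwegersE x : ℝ) : ℂ))
      ((2 * Real.exp (-Real.pi * x ^ 2) : ℝ) : ℂ) x :=
    ((hasDerivAt_zwegersE x).const_add 1).ofReal_comp
  have hexp (x : ℝ) : HasDerivAt (fun x : ℝ ↦ expPi (2 * x * z) / (2 * Real.pi * I * z))
      (expPi (2 * x * z)) x := by
    have h := ((hasDerivAt_id (x : ℂ)).const_mul (2 * Real.pi * I * z)).cexp.comp_ofReal.div_const
      (2 * Real.pi * I * z)
    have hform (t : ℝ) : expPi (2 * t * z) = cexp (2 * Real.pi * I * z * t) := by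
      rw [expPi]
      ring_nf
    rw [mul_one, mul_div_cancel_right₀ _ hne] at h
    simp only [hform]
    exact h
  have hparts := integral_mul_deriv_eq_deriv_mul_of_integrable (fun x _ ↦ hdamp x)
    (fun x _ ↦ hexp x) ((integrable_dampedExp hz).congr (.of_forall fun _ ↦ mul_comm _ _))
    (((integrable_expPi_mul_gaussian z).div_const _).congr
      (.of_forall fun _ ↦ mul_div_assoc _ _ _))
    (((integrable_dampedExp hz).div_const (2 * Real.pi * I * z)).congr
      (.of_forall fun x ↦ by simp only [dampedExp, Pi.mul_apply]; ring))
  simp only [← mul_div_assoc, integral_div, integral_expPi_mul_gaussian] at hparts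
  simp only [dampedExp, mul_comm (expPi _), hparts, gaussPole]
  have hz0 := ne_zero_of_im_pos hz
  field_simp
  rw [I_sq]

open FourierTransform

lemma fourier_dampedExp_comp_mul {s : ℝ} (hs : 0 < s) {w : ℂ} (hw : 0 < w.im) (t : ℝ) :
    𝓕 (fun x : ℝ ↦ dampedExp (w / s) (x * s)) t = s⁻¹ * gaussPole ((w - t) / s) := by
  have him : 0 < ((w - t) / s).im := by
    rw [div_ofReal_im, sub_im, ofReal_im, sub_zero]
    positivity
  have hs0 : (s : ℂ) ≠ 0 := ofReal_ne_zero.2 hs.ne'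
  have hshift (x : ℝ) : cexp (↑(-2 * Real.pi * x * t) * I) • dampedExp (w / s) (x * s) =
      dampedExp ((w - t) / s) (x * s) := by
    rw [dampedExp, dampedExp, smul_eq_mul, ← mul_assoc, expPi, expPi, ← Complex.exp_add]
    congr 2
    push_cast
    field_simp
    ring
  rw [Real.fourier_real_eq_integral_exp_smul]
  simp only [hshift]
  rw [Measure.integral_comp_mul_right, integral_dampedExp him, abs_of_pos (inv_pos.2 hs), real_smul,
    ofReal_inv]

lemma norm_gaussPole (z : ℂ) :
    ‖gaussPole z‖ = Real.exp (Real.pi * (z.im ^ 2 - z.re ^ 2)) / (Real.pi * ‖z‖) := by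
  have hre : (-Real.pi * z ^ 2 : ℂ).re = Real.pi * (z.im ^ 2 - z.re ^ 2) := by
    rw [← ofReal_neg, re_ofReal_mul, sq, mul_re]
    ring
  rw [gaussPole, norm_mul, norm_div, norm_I, norm_mul, Complex.norm_real,
    Real.norm_of_nonneg Real.pi_pos.le, Complex.norm_exp, hre]
  ring

lemma summable_gaussPole_add_int {s : ℝ} (hs : 0 < s) {w : ℂ} (hw : w.im ≠ 0) :
    Summable fun n : ℤ ↦ gaussPole ((w + n) / s) := by
  have hgauss := summable_gaussian_int_add (t := s⁻¹ ^ 2) (by positivity) w.re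
  refine Summable.of_norm_bounded
    (hgauss.mul_left (Real.exp (Real.pi * (w.im / s) ^ 2) / (Real.pi * |w.im / s|))) fun n ↦ ?_
  have him : ((w + n) / s).im = w.im / s := by simp
  have hre : ((w + n) / s).re = (n + w.re) / s := by
    rw [div_ofReal_re, add_re, intCast_re, add_comm]
  have hle : |w.im / s| ≤ ‖(w + n) / s‖ := him ▸ abs_im_le_norm _
  rw [norm_gaussPole, him, hre, div_mul_eq_mul_div, ← Real.exp_add]
  gcongr
  ring_nf
  rfl

lemma tsum_dampedExp {s : ℝ} (hs : 0 < s) {w : ℂ} (hw : 0 < w.im) (x : ℝ) :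
    ∑' k : ℤ, dampedExp (w / s) ((x + k) * s) =
      ∑' n : ℤ, expPi (-(2 * n * x)) * (s⁻¹ * gaussPole ((w + n) / s)) := by
  have him : 0 < (w / s).im := by
    rw [div_ofReal_im]
    positivity
  have hfourier (n : ℤ) : 𝓕 (fun x : ℝ ↦ dampedExp (w / s) (x * s)) n =
      s⁻¹ * gaussPole ((w + ↑(-n)) / s) := by
    rw [fourier_dampedExp_comp_mul hs hw, Int.cast_neg, ← sub_eq_add_neg, ofReal_intCast]
  have hdecay : (fun x : ℝ ↦ dampedExp (w / s) (x * s)) =O[cocompact ℝ] fun x ↦ |x| ^ (-2 : ℝ) := by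
    have h := (isBigO_dampedExp him).comp_tendsto
      (Homeomorph.mulRight₀ s hs.ne').isClosedEmbedding.tendsto_cocompact
    refine h.trans (Asymptotics.IsBigO.of_bound (|s| ^ (-2 : ℝ)) (Eventually.of_forall fun x ↦ ?_))
    rw [Function.comp_apply, Homeomorph.coe_mulRight₀, abs_mul,
      Real.mul_rpow (abs_nonneg _) (abs_nonneg _), mul_comm, norm_mul,
      Real.norm_of_nonneg (Real.rpow_nonneg (abs_nonneg s) _)]
  have hsum : Summable fun n : ℤ ↦ 𝓕 (fun x : ℝ ↦ dampedExp (w / s) (x * s)) n := by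
    simp only [hfourier]
    exact ((Equiv.neg ℤ).summable_iff.2 (summable_gaussPole_add_int hs hw.ne')).mul_left _
  have hpoisson := Real.tsum_eq_tsum_fourier_of_rpow_decay_of_summable
    (by fun_prop : Continuous fun x ↦ dampedExp (w / s) (x * s)) one_lt_two hdecay hsum x
  rw [hpoisson, ← (Equiv.neg ℤ).tsum_eq]
  refine tsum_congr fun n ↦ ?_
  rw [hfourier, Equiv.neg_apply, neg_neg, mul_comm, fourier_coe_apply, expPi]
  congr 2
  push_cast
  ring

lemma tsum_expPi_mul_one_add_zwegersE {s : ℝ} (hs : 0 < s) {w : ℂ} (hw : 0 < w.im) (x : ℝ) :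
    ∑' k : ℤ, expPi (2 * (x + k) * w) * ↑(1 + zwegersE ((x + k) * s)) =
      ∑' n : ℤ, expPi (-(2 * n * x)) * (s⁻¹ * gaussPole ((w + n) / s)) := by
  rw [← tsum_dampedExp hs hw]
  refine tsum_congr fun k ↦ ?_
  have hs0 : (s : ℂ) ≠ 0 := ofReal_ne_zero.2 hs.ne'
  rw [dampedExp]
  congr 2
  push_cast
  field_simp

lemma tsum_expPi_mul_sign_add_zwegersE {s : ℝ} (hs : 0 < s) {w : ℂ} (hw : w.im ≠ 0) (x : ℝ) :
    ∑' k : ℤ, expPi (2 * (x + k) * w) * ↑(Real.sign w.im + zwegersE ((x + k) * s)) =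
      ∑' n : ℤ, expPi (-(2 * n * x)) * (s⁻¹ * gaussPole ((w + n) / s)) := by
  rcases hw.lt_or_gt with hneg | hpos
  · have h := congrArg Neg.neg
      (tsum_expPi_mul_one_add_zwegersE hs (w := -w) (by simpa using hneg) (-x))
    rw [← tsum_neg, ← tsum_neg] at h
    rw [← (Equiv.neg ℤ).tsum_eq, Real.sign_of_neg hneg]
    refine (tsum_congr fun k ↦ ?_).trans
      (h.trans ((tsum_congr fun n ↦ ?_).trans ((Equiv.neg ℤ).tsum_eq _)))
    · have hE : (x + ((-k : ℤ) : ℝ)) * s = -((-x + k) * s) := by push_cast; ring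
      rw [Equiv.neg_apply, hE, zwegersE_neg]
      push_cast
      ring_nf
    · have hpole : (w + ((-n : ℤ) : ℂ)) / s = -((-w + n) / s) := by push_cast; ring
      rw [Equiv.neg_apply, hpole, gaussPole_neg]
      push_cast
      ring_nf
  · rw [Real.sign_of_pos hpos, tsum_expPi_mul_one_add_zwegersE hs hpos]

/-! ### Appell terms and shadow terms -/

lemma sign_natCast_add_half (n : ℕ) : Real.sign (n + 1 / 2) = 1 :=
  Real.sign_of_pos (by positivity)

lemma sign_neg_add_half (x : ℝ) : Real.sign (-(x + 1) + 1 / 2) = -Real.sign (x + 1 / 2) := by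
  rw [← Real.sign_neg]
  ring_nf

lemma hasSum_expPi_mul_one_add_sign {w : ℂ} (hw : 0 < w.im) :
    HasSum (fun k : ℤ ↦ expPi (2 * (k + 1 / 2) * w) * ↑(1 + Real.sign (k + 1 / 2)))
      (2 * expPi w / (1 - expPi (2 * w))) := by
  have hnorm : ‖expPi (2 * w)‖ < 1 := by
    rw [norm_expPi, Real.exp_lt_one_iff, neg_lt_zero]
    simpa [Real.pi_pos] using hw
  have hpow (n : ℕ) : expPi (2 * (n + 1 / 2) * w) = expPi w * expPi (2 * w) ^ n := by
    rw [expPi, expPi, expPi, ← Complex.exp_nat_mul, ← Complex.exp_add]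
    ring_nf
  have hnat := (hasSum_geometric_of_norm_lt_one hnorm).mul_left (2 * expPi w)
  rw [← div_eq_mul_inv] at hnat
  rw [← add_zero (2 * expPi w / _)]
  refine HasSum.of_nat_of_neg_add_one (hnat.congr_fun fun n ↦ ?_)
    ((hasSum_zero (α := ℂ)).congr_fun fun n ↦ ?_)
  · push_cast
    rw [hpow, sign_natCast_add_half]
    push_cast
    ring
  · push_cast
    rw [sign_neg_add_half, sign_natCast_add_half]
    simp

theorem hasSum_expPi_mul_sign_add_sign {w : ℂ} (hw : w.im ≠ 0) :
    HasSum
      (fun k : ℤ ↦ expPi (2 * (k + 1 / 2) * w) * ↑(Real.sign w.im + Real.sign (k + 1 / 2)))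
      (2 * expPi w / (1 - expPi (2 * w))) := by
  rcases hw.lt_or_gt with hneg | hpos
  · have hreflect := ((Equiv.subLeft (-1 : ℤ)).hasSum_iff.2
      (hasSum_expPi_mul_one_add_sign (w := -w) (by simpa using hneg))).neg
    have hvalue : 2 * expPi w / (1 - expPi (2 * w)) =
        -(2 * expPi (-w) / (1 - expPi (2 * -w))) := by
      have hden : 1 - (expPi w * expPi w)⁻¹ =
          -((1 - expPi w * expPi w) / (expPi w * expPi w)) := by
        field_simp [expPi_ne_zero w]
        ring
      rw [mul_neg, two_mul w, expPi_neg, expPi_neg, expPi_add, hden]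
      field_simp [expPi_ne_zero w]
    rw [hvalue]
    refine hreflect.congr_fun fun k ↦ ?_
    have hsign : Real.sign (((Equiv.subLeft (-1 : ℤ) k : ℤ) : ℝ) + 1 / 2) =
        -Real.sign (k + 1 / 2) := by
      rw [← sign_neg_add_half]
      push_cast [Equiv.subLeft_apply]
      ring_nf
    rw [Function.comp_apply, hsign, Real.sign_of_neg hneg, Equiv.subLeft_apply]
    push_cast
    ring_nf
  · rw [Real.sign_of_pos hpos]
    exact hasSum_expPi_mul_one_add_sign hpos

lemma hasSum_jacobiThetaZw (v : ℂ) {τ : ℂ} (hτ : 0 < τ.im) :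
    HasSum (fun n : ℤ ↦ expPi (2 * (n + 1 / 2) * (v + 1 / 2) + (n + 1 / 2) ^ 2 * τ))
      (jacobiThetaZw v τ) := by
  rw [jacobiThetaZw_eq_jacobiTheta₂]
  refine ((hasSum_jacobiTheta₂ _ hτ).mul_left _).congr_fun fun n ↦ ?_
  rw [← expPi_add]
  ring_nf

lemma eventually_sign_add_eq (b c : ℝ) :
    ∀ᶠ n : ℤ in cofinite, Real.sign (n + b) = Real.sign (n + c) ∧ (n + c : ℝ) ≠ 0 := by
  have h := Int.tendsto_coe_cofinite.eventually
    (isCompact_Icc (a := -(|b| + |c|)) (b := |b| + |c|)).compl_mem_cocompact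
  filter_upwards [h] with n hn
  rw [Set.mem_Icc, ← abs_le, not_le, lt_abs] at hn
  have hb := abs_le.1 (le_refl |b|)
  have hc := abs_le.1 (le_refl |c|)
  rcases hn with hn | hn
  · rw [Real.sign_of_pos, Real.sign_of_pos] <;> grind
  · rw [Real.sign_of_neg, Real.sign_of_neg] <;> grind

lemma norm_sign_sub_zwegersE_mul_expPi_le {x a : ℝ} (hx : x + a ≠ 0) (y : ℝ) {z τ : ℂ}
    (hτ : 0 < τ.im) (ha : z.im = a * τ.im) :
    ‖((Real.sign (x + a) - zwegersE ((x + a) * √(2 * τ.im)) : ℝ) : ℂ) *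
      expPi (y - x ^ 2 * τ - 2 * x * z)‖ ≤
    Real.exp (-Real.pi * a ^ 2 * τ.im) * Real.exp (-Real.pi * (x + a) ^ 2 * τ.im) := by
  have hs : 0 < √(2 * τ.im) := by positivity
  have hsign : Real.sign ((x + a) * √(2 * τ.im)) = Real.sign (x + a) := by
    rcases hx.lt_or_gt with hx | hx
    · rw [Real.sign_of_neg hx, Real.sign_of_neg (mul_neg_of_neg_of_pos hx hs)]
    · rw [Real.sign_of_pos hx, Real.sign_of_pos (mul_pos hx hs)]
  have him : (y - x ^ 2 * τ - 2 * x * z : ℂ).im = -(x ^ 2 + 2 * x * a) * τ.im := by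
    rw [← ofReal_pow, ← ofReal_ofNat, ← ofReal_mul, sub_im, sub_im, im_ofReal_mul, im_ofReal_mul,
      ofReal_im, ha]
    ring
  rw [norm_mul, norm_real, Real.norm_eq_abs, ← hsign, norm_expPi, him]
  refine (mul_le_mul_of_nonneg_right
    (abs_sign_sub_zwegersE_le (mul_ne_zero hx hs.ne')) (Real.exp_nonneg _)).trans_eq ?_
  rw [← Real.exp_add, ← Real.exp_add, mul_pow, Real.sq_sqrt (by positivity)]
  ring_nf

lemma hasSum_Rzw (z : ℂ) {τ : ℂ} (hτ : 0 < τ.im) :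
    HasSum
      (fun n : ℤ ↦
        ((Real.sign (n + 1 / 2) - zwegersE ((n + 1 / 2 + z.im / τ.im) * √(2 * τ.im)) : ℝ) : ℂ) *
          expPi (n - (n + 1 / 2) ^ 2 * τ - 2 * (n + 1 / 2) * z))
      (Rzw z τ) := by
  have hterm : Rzw z τ = ∑' n : ℤ,
      ((Real.sign (n + 1 / 2) - zwegersE ((n + 1 / 2 + z.im / τ.im) * √(2 * τ.im)) : ℝ) : ℂ) *
        expPi (n - (n + 1 / 2) ^ 2 * τ - 2 * (n + 1 / 2) * z) := by
    refine tsum_congr fun n ↦ ?_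
    rw [mul_assoc, ← expPi_int, expPi, expPi, ← Complex.exp_add, zwegersE]
    ring_nf
  rw [hterm]
  refine (Summable.of_norm_bounded_eventually
    ((summable_gaussian_int_add hτ (1 / 2 + z.im / τ.im)).mul_left
      (Real.exp (-Real.pi * (z.im / τ.im) ^ 2 * τ.im))) ?_).hasSum
  filter_upwards [eventually_sign_add_eq (1 / 2) (1 / 2 + z.im / τ.im)] with n ⟨hsign, hne⟩
  rw [← add_assoc] at hsign hne
  have h := norm_sign_sub_zwegersE_mul_expPi_le hne n hτ (div_mul_cancel₀ _ hτ.ne').symm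
  rw [hsign, ← add_assoc]
  push_cast at h ⊢
  exact h

/-- The change of summation indices turning the product of the series of `ϑ(v)` and `R(u - v)` into
a sum over `m` of the shadow contributions of the `m`-th term of the Appell sum `ϑ(v) μ(u, v)`. -/
def thetaShadowIndex : ℤ × ℤ ≃ ℤ × ℤ where
  toFun x := (x.1 + x.2, -(x.2 + 1))
  invFun x := (x.1 + x.2 + 1, -(x.2 + 1))
  left_inv x := by ext <;> simp [add_assoc]
  right_inv x := by ext <;> simp

theorem hasSum_jacobiThetaZw_mul_Rzw (u v : ℂ) {τ : ℂ} (hτ : 0 < τ.im) :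
    HasSum
      (fun x : ℤ × ℤ ↦ expPi (x.1 + x.1 ^ 2 * τ + 2 * x.1 * v) *
        (expPi (2 * (x.2 + 1 / 2) * (u + x.1 * τ)) *
          ↑(zwegersE ((x.2 + 1 / 2 - (u - v).im / τ.im) * √(2 * τ.im)) -
            Real.sign (x.2 + 1 / 2))))
      (I * (jacobiThetaZw v τ * Rzw (u - v) τ)) := by
  have hprod := (thetaShadowIndex.hasSum_iff.2
    (hasSum_mul_prod (hasSum_jacobiThetaZw v hτ) (hasSum_Rzw (u - v) hτ))).mul_left I
  refine hprod.congr_fun fun ⟨m, k⟩ ↦ ?_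
  have hE : zwegersE ((-(k + 1) + 1 / 2 + (u - v).im / τ.im) * √(2 * τ.im)) =
      -zwegersE ((k + 1 / 2 - (u - v).im / τ.im) * √(2 * τ.im)) := by
    rw [← zwegersE_neg]
    ring_nf
  simp only [Function.comp_apply, thetaShadowIndex, Equiv.coe_fn_mk]
  push_cast
  rw [hE, sign_neg_add_half, ← expPi_one_half]
  generalize zwegersE _ = E
  generalize Real.sign _ = σ
  calc _ = expPi (1 / 2 + (2 * (m + k + 1 / 2) * (v + 1 / 2) + (m + k + 1 / 2) ^ 2 * τ) +
        (-(k + 1) - (-(k + 1) + 1 / 2) ^ 2 * τ - 2 * (-(k + 1) + 1 / 2) * (u - v))) *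
          (E - σ) := by
        rw [← mul_assoc, ← expPi_add]
        ring_nf
    _ = _ := by
        rw [expPi_add, expPi_add]
        push_cast
        ring

lemma inv_sqrt_mul_gaussPole (p q : ℝ) (τ : ℍ) :
    ((√(2 * τ.im))⁻¹ : ℝ) * gaussPole ((p * τ + q) / √(2 * τ.im)) =
      I / Real.pi * expPi (-(p * (p * τ + q))) * gaussRecip p q τ := by
  have hs : (√(2 * τ.im) : ℂ) ≠ 0 := ofReal_ne_zero.2 (by positivity)
  have hy : (τ.im : ℂ) ≠ 0 := ofReal_ne_zero.2 τ.im_ne_zero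
  have hs2 : (√(2 * τ.im) : ℂ) ^ 2 = 2 * τ.im := by
    rw [← ofReal_pow, Real.sq_sqrt (by positivity)]
    push_cast
    rfl
  have hsq : (p * τ + q : ℂ) ^ 2 = normSq (p * τ + q) + 2 * I * p * τ.im * (p * τ + q) := by
    have him : (p * τ + q : ℂ) - starRingEnd ℂ (p * τ + q : ℂ) = 2 * I * p * τ.im := by
      rw [sub_conj]
      simp only [add_im, mul_im, ofReal_re, coe_im, ofReal_im, coe_re, zero_mul, add_zero]
      push_cast
      ring
    rw [← mul_conj, ← sub_eq_iff_eq_add', ← him]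
    ring
  have hexp : cexp (-Real.pi * ((p * τ + q) / √(2 * τ.im)) ^ 2) =
      expPi (-(p * (p * τ + q))) *
        Real.exp (-(Real.pi * normSq (p * τ + q) / (2 * τ.im))) := by
    rw [div_pow, hs2, hsq, expPi, ofReal_exp, ← Complex.exp_add]
    push_cast
    congr 1
    field_simp
    ring
  rw [gaussPole, hexp, gaussRecip]
  push_cast
  field_simp

lemma hasSum_appell_add_shadow {s : ℝ} (hs : 0 < s) {w : ℂ} (hw : w.im ≠ 0) (c : ℝ)
    (hshadow : Summable fun k : ℤ ↦
      expPi (2 * (k + 1 / 2) * w) * ↑(zwegersE ((k + 1 / 2 - c) * s) - Real.sign (k + 1 / 2))) :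
    2 * expPi w / (1 - expPi (2 * w)) +
        ∑' k : ℤ, expPi (2 * (k + 1 / 2) * w) *
          ↑(zwegersE ((k + 1 / 2 - c) * s) - Real.sign (k + 1 / 2)) =
      ∑' n : ℤ, expPi (2 * c * (w + n) - n) * (s⁻¹ * gaussPole ((w + n) / s)) := by
  have happell := hasSum_expPi_mul_sign_add_sign hw
  have hpoisson := congrArg (expPi (2 * c * w) * ·)
    (tsum_expPi_mul_sign_add_zwegersE hs hw (1 / 2 - c))
  simp only [← tsum_mul_left] at hpoisson
  rw [← happell.tsum_eq, ← happell.summable.tsum_add hshadow]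
  refine (tsum_congr fun k ↦ ?_).trans (hpoisson.trans (tsum_congr fun n ↦ ?_))
  · rw [← mul_add, ← ofReal_add, add_add_sub_cancel, ← mul_assoc, ← expPi_add]
    push_cast
    ring_nf
  · rw [← mul_assoc, ← expPi_add]
    push_cast
    ring_nf

lemma two_mul_jacobiThetaZw_mul_muZw (u : ℂ) {v τ : ℂ} (hv : jacobiThetaZw v τ ≠ 0) :
    2 * jacobiThetaZw v τ * muZw u v τ =
      ∑' m : ℤ, expPi (m + m ^ 2 * τ + 2 * m * v) *
        (2 * expPi (u + m * τ) / (1 - expPi (2 * (u + m * τ)))) := by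
  have hcancel (x y : ℂ) : 2 * jacobiThetaZw v τ * (x / jacobiThetaZw v τ * y) = 2 * x * y := by
    field_simp
  rw [muZw, hcancel, ← tsum_mul_left]
  refine tsum_congr fun m ↦ ?_
  have hden : cexp (2 * Real.pi * I * u) * cexp (2 * Real.pi * I * m * τ) =
      expPi (2 * (u + m * τ)) := by
    rw [expPi, ← Complex.exp_add]
    ring_nf
  have hnum : cexp (Real.pi * I * u) * ((-1) ^ m * cexp (2 * Real.pi * I * m * v) *
      cexp (Real.pi * I * τ * m * (m + 1))) =
        expPi (m + m ^ 2 * τ + 2 * m * v) * expPi (u + m * τ) := by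
    rw [← expPi_int]
    simp only [expPi, ← Complex.exp_add]
    ring_nf
  rw [hden, mul_div_assoc', mul_assoc 2, hnum]
  ring

lemma expPi_mul_inv_sqrt_mul_gaussPole (m n : ℤ) (α α' β β' : ℝ) (τ : ℍ) :
    expPi (m + m ^ 2 * τ + 2 * m * (α' * τ + β')) *
        (expPi (2 * ↑(α - α') * (α * τ + β + m * τ + n) - n) *
          (((√(2 * τ.im))⁻¹ : ℝ) * gaussPole ((α * τ + β + m * τ + n) / √(2 * τ.im)))) =
      I / Real.pi * expPi (α * (α - 2 * α') * τ) *
        (expPi ↑(m - n + 2 * m * β' + (α - 2 * α' - m) * (n + β)) *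
          gaussRecip (m + α) (n + β) τ) := by
  have hz : (α * τ + β + m * τ + n : ℂ) = (m + α : ℝ) * τ + (n + β : ℝ) := by push_cast; ring
  rw [hz, inv_sqrt_mul_gaussPole]
  have hphase : expPi (m + m ^ 2 * τ + 2 * m * (α' * τ + β')) *
      expPi (2 * ↑(α - α') * ((m + α : ℝ) * τ + (n + β : ℝ)) - n) *
      expPi (-((m + α : ℝ) * ((m + α : ℝ) * τ + (n + β : ℝ)))) =
      expPi (α * (α - 2 * α') * τ) *
        expPi ↑(m - n + 2 * m * β' + (α - 2 * α' - m) * (n + β)) := by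
    rw [← expPi_add, ← expPi_add, ← expPi_add]
    push_cast
    ring_nf
  linear_combination (I / Real.pi * gaussRecip (m + α) (n + β) τ) * hphase

lemma hasSum_tsum_fiberwise {f : ℤ × ℤ → ℂ} {a : ℂ} (hf : HasSum f a) :
    HasSum (fun m ↦ ∑' n, f (m, n)) a :=
  hf.prod_fiberwise fun m ↦ (hf.summable.prod_factor m).hasSum

lemma summable_expPi_mul_gaussRecip {α : ℝ} (hα : ∀ m : ℤ, (m : ℝ) ≠ α) (β : ℝ)
    (φ : ℤ × ℤ → ℝ) (τ : ℍ) :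
    Summable fun x : ℤ × ℤ ↦ expPi (φ x) * gaussRecip (x.1 + α) (x.2 + β) τ := by
  refine .of_norm ((summable_gaussRecip hα β τ).congr fun x ↦ ?_)
  rw [norm_mul, norm_expPi, ofReal_im, mul_zero, neg_zero, Real.exp_zero, one_mul]

lemma im_add_mul_ne_zero {α : ℝ} (hα : ∀ m : ℤ, (m : ℝ) ≠ α) (β : ℝ) (m : ℤ) (τ : ℍ) :
    (α * τ + β + m * τ : ℂ).im ≠ 0 := by
  have hfactor : (α * τ + β + m * τ : ℂ).im = (α + m) * τ.im := by
    simp only [add_im, mul_im, ofReal_re, coe_im, ofReal_im, coe_re, zero_mul, add_zero, intCast_re,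
      intCast_im]
    ring
  rw [hfactor]
  refine mul_ne_zero (fun h ↦ hα (-m) ?_) τ.im_ne_zero
  push_cast
  linarith

theorem two_mul_jacobiThetaZw_mul_muHat {α : ℝ} (hα : ∀ m : ℤ, (m : ℝ) ≠ α) (α' β β' : ℝ)
    (τ : ℍ) (hv : jacobiThetaZw (α' * τ + β') τ ≠ 0) :
    2 * jacobiThetaZw (α' * τ + β') τ * muHat (α * τ + β) (α' * τ + β') τ =
      I / Real.pi * expPi (α * (α - 2 * α') * τ) *
        ∑' x : ℤ × ℤ, expPi ↑(x.1 - x.2 + 2 * x.1 * β' + (α - 2 * α' - x.1) * (x.2 + β)) *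
          gaussRecip (x.1 + α) (x.2 + β) τ := by
  have hτ : 0 < (τ : ℂ).im := τ.im_pos
  have hs : 0 < √(2 * (τ : ℂ).im) := by positivity
  have hc : ((α * τ + β - (α' * τ + β') : ℂ)).im / (τ : ℂ).im = α - α' := by
    rw [div_eq_iff hτ.ne']
    simp only [sub_im, add_im, mul_im, ofReal_re, ofReal_im, zero_mul, add_zero]
    ring
  have hshadow := hasSum_jacobiThetaZw_mul_Rzw (α * τ + β) (α' * τ + β') hτ
  rw [hc] at hshadow
  have hlattice := (summable_expPi_mul_gaussRecip hα β
    (fun x ↦ x.1 - x.2 + 2 * x.1 * β' + (α - 2 * α' - x.1) * (x.2 + β)) τ).hasSum.mul_left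
      (I / Real.pi * expPi (α * (α - 2 * α') * τ))
  have hpoint (m : ℤ) := hasSum_appell_add_shadow hs (im_add_mul_ne_zero hα β m τ) (α - α')
    (by simpa only [summable_mul_left_iff (expPi_ne_zero _)] using
      hshadow.summable.prod_factor m)
  have hdiff := ((hasSum_tsum_fiberwise hlattice).sub (hasSum_tsum_fiberwise hshadow)).tsum_eq
  rw [muHat, mul_add, two_mul_jacobiThetaZw_mul_muZw _ hv, ← eq_sub_iff_add_eq]
  refine (tsum_congr fun m ↦ ?_).trans (hdiff.trans ?_)
  · simp only [← expPi_mul_inv_sqrt_mul_gaussPole, tsum_mul_left]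
    rw [eq_sub_iff_add_eq, ← mul_add, hpoint m]
    rfl
  · ring

/-! ### The transformation of `V̂₁₁` -/

lemma expPi_quarter_half_sub_half (m n : ℤ) :
    expPi ↑(m - n + 2 * m * 0 + (1 / 4 - 2 * (1 / 2) - m) * (n + 1 / 2) : ℝ) =
      -I * expPi ((m + 1 / 4) * (n + 1 / 2)) := by
  have hI : -I = expPi (-(1 / 2)) := by rw [expPi_neg, expPi_one_half, inv_I]
  rw [hI, ← expPi_add]
  refine expPi_eq_of_eq_add (-(n + m * n)) ?_
  push_cast
  ring

theorem two_mul_jacobiThetaZw_half_period_mul_muHat (τ : ℍ) :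
    2 * jacobiThetaZw (τ / 2) τ * muHat (τ / 4 + 1 / 2) (τ / 2) τ =
      (Real.pi : ℂ)⁻¹ * expPi (-(3 * τ / 16)) * quarterHalfSum τ := by
  have hα (m : ℤ) : (m : ℝ) ≠ 1 / 4 := by
    intro h
    have h4 : (4 * m : ℝ) = 1 := by linarith
    norm_cast at h4
    omega
  have hu : ((1 / 4 : ℝ) * τ + (1 / 2 : ℝ) : ℂ) = τ / 4 + 1 / 2 := by push_cast; ring
  have hv : ((1 / 2 : ℝ) * τ + (0 : ℝ) : ℂ) = τ / 2 := by push_cast; ring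
  have hτ : ((1 / 4 : ℝ) * ((1 / 4 : ℝ) - 2 * (1 / 2 : ℝ)) * τ : ℂ) = -(3 * τ / 16) := by
    push_cast
    ring
  have h := two_mul_jacobiThetaZw_mul_muHat hα (1 / 2) (1 / 2) 0 τ
    (by rw [hv]; exact jacobiThetaZw_half_period_ne_zero τ.im_pos)
  simp only [expPi_quarter_half_sub_half, mul_assoc (-I), tsum_mul_left] at h
  rw [hu, hv, hτ, ← quarterHalfSum] at h
  rw [h]
  linear_combination (-(Real.pi : ℂ)⁻¹ * expPi (-(3 * τ / 16)) * quarterHalfSum τ) * I_mul_I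

theorem Vhat11_mul_dedekindEta_pow_three (τ : ℍ) :
    Vhat11 τ * dedekindEta τ ^ 3 =
      -(2 * Real.pi : ℂ)⁻¹ * (quarterHalfSum τ / kleinForm ![1 / 2, 0] τ) := by
  have hη := dedekindEta_ne_zero τ.im_pos
  have hϑ := jacobiThetaZw_half_period_ne_zero τ.im_pos
  have hmuHat : muHat (τ / 4 + 1 / 2) (τ / 2) τ =
      (Real.pi : ℂ)⁻¹ * expPi (-(3 * τ / 16)) * quarterHalfSum τ / (2 * jacobiThetaZw (τ / 2) τ) :=
    eq_div_of_mul_eq (mul_ne_zero two_ne_zero hϑ)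
      ((mul_comm _ _).trans (two_mul_jacobiThetaZw_half_period_mul_muHat τ))
  have hexp : cexp (-(Real.pi : ℂ) * I * τ / 16) * expPi (-(3 * τ / 16)) =
      (expPi (τ / 4))⁻¹ := by
    rw [← expPi_neg, expPi, expPi, ← Complex.exp_add]
    ring_nf
  calc _ = -(2 * Real.pi : ℂ)⁻¹ *
        (cexp (-(Real.pi : ℂ) * I * τ / 16) * expPi (-(3 * τ / 16)) * quarterHalfSum τ *
          dedekindEta τ ^ 3 / jacobiThetaZw (τ / 2) τ) := by
        rw [Vhat11, hmuHat]
        field_simp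
    _ = _ := by
        rw [hexp, kleinForm_half_zero]
        field_simp

theorem quarterHalfSum_div_kleinForm_slash {g : SL(2, ℤ)} {k β κ δ : ℤ}
    (ha : g 0 0 = 1 + 4 * k) (hb : g 0 1 = 4 * β) (hc : g 1 0 = 2 * κ) (hd : g 1 1 = 1 + 4 * δ) :
    (quarterHalfSum / kleinForm ![1 / 2, 0]) ∣[(2 : ℤ)] g =
      (expPi (-(g 0 0 * g 0 1 / 16 + g 1 0 * g 1 1 / 4)) / expPi β) •
        (quarterHalfSum / kleinForm ![1 / 2, 0]) := by
  rw [show (2 : ℤ) = 1 - -1 from rfl, div_slash_SL2,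
    quarterHalfSum_slash ha hb hc hd, kleinForm_half_zero_slash ha hb]
  ext τ
  exact mul_div_mul_comm _ _ _ _

theorem Vhat11_mul_dedekindEta_pow_three_smul {g : SL(2, ℤ)} {k β κ δ : ℤ}
    (ha : g 0 0 = 1 + 4 * k) (hb : g 0 1 = 4 * β) (hc : g 1 0 = 2 * κ) (hd : g 1 1 = 1 + 4 * δ)
    (τ : ℍ) :
    Vhat11 ↑(g • τ) * dedekindEta ↑(g • τ) ^ 3 =
      expPi (-(g 0 0 * g 0 1 / 16 + g 1 0 * g 1 1 / 4)) / expPi β *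
        (g 1 0 * τ + g 1 1) ^ 2 * (Vhat11 τ * dedekindEta τ ^ 3) := by
  have hslash := congrFun (quarterHalfSum_div_kleinForm_slash ha hb hc hd) τ
  rw [SL_slash_apply, ModularGroup.denom_apply, Pi.smul_apply, smul_eq_mul, _root_.zpow_neg,
    mul_inv_eq_iff_eq_mul₀ (zpow_ne_zero _ ?_), Pi.div_apply, Pi.div_apply,
    zpow_ofNat] at hslash
  · rw [Vhat11_mul_dedekindEta_pow_three, Vhat11_mul_dedekindEta_pow_three, hslash]
    ring
  · rw [← ModularGroup.denom_apply]
    exact denom_ne_zero _ _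

lemma neg_one_zpow_mul_exp_eq_expPi_div {a b c d k β κ δ : ℤ} (ha : a = 1 + 4 * k)
    (hb : b = 4 * β) (hc : c = 2 * κ) (hd : d = 1 + 4 * δ) :
    (-1 : ℂ) ^ ((a - 1) / 4 + c / 2 + (b / 4 + (d - 1) / 2) + (a - 1) / 2 + b / 2) *
        cexp (2 * Real.pi * I * (((4 - 4 * a - a * b + 4 * c : ℤ) : ℂ) / 32)) =
      expPi (-(a * b / 16 + c * d / 4)) / expPi β := by
  have hexponent : (a - 1) / 4 + c / 2 + (b / 4 + (d - 1) / 2) + (a - 1) / 2 + b / 2 =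
      3 * k + κ + 3 * β + 2 * δ := by omega
  have hexp : cexp (2 * Real.pi * I * (((4 - 4 * a - a * b + 4 * c : ℤ) : ℂ) / 32)) =
      expPi (((4 - 4 * a - a * b + 4 * c : ℤ) : ℂ) / 16) := by
    rw [expPi]
    ring_nf
  rw [hexponent, hexp, div_eq_mul_inv (expPi _), ← expPi_int, ← expPi_neg, ← expPi_add, ← expPi_add]
  refine expPi_eq_of_eq_add (δ + k + 2 * β + κ * (1 + δ)) ?_
  rw [ha, hb, hc, hd]
  push_cast
  ring

/-- Theorem 1.1 for `(m,n) = (1,1)`: modular transformation of `V̂₁₁` on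
`Γ¹(4) ∩ Γ₀(2)`, with the eta-multiplier absorbed via `η(γτ)³`. -/
theorem Vhat11_transform (a b c d : ℤ) (hdet : a * d - b * c = 1)
    (ha : Int.ModEq 4 a 1) (hd : Int.ModEq 4 d 1)
    (hb : Int.ModEq 4 b 0) (hc : Int.ModEq 2 c 0) :
    ∀ τ : ℂ, 0 < τ.im →
      Vhat11 (((a : ℂ) * τ + b) / ((c : ℂ) * τ + d)) *
          dedekindEta (((a : ℂ) * τ + b) / ((c : ℂ) * τ + d)) ^ 3 =
        (-1 : ℂ) ^ ((a - 1) / 4 + c / 2 + (b / 4 + (d - 1) / 2) + (a - 1) / 2 + b / 2) *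
          Complex.exp (2 * (Real.pi : ℂ) * I * (((4 - 4 * a - a * b + 4 * c : ℤ) : ℂ) / 32)) *
          ((c : ℂ) * τ + d) ^ 2 * dedekindEta τ ^ 3 * Vhat11 τ := by
  intro τ hτ
  obtain ⟨k, hk⟩ := ha.symm.dvd
  obtain ⟨δ, hδ⟩ := hd.symm.dvd
  obtain ⟨β, hβ⟩ := hb.symm.dvd
  obtain ⟨κ, hκ⟩ := hc.symm.dvd
  replace hk : a = 1 + 4 * k := by lia
  replace hδ : d = 1 + 4 * δ := by lia
  rw [sub_zero] at hβ hκ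
  let g : SL(2, ℤ) := ⟨!![a, b; c, d], (det_fin_two_of a b c d).trans hdet⟩
  have htransform := Vhat11_mul_dedekindEta_pow_three_smul (g := g) hk hβ hκ hδ ⟨τ, hτ⟩
  rw [coe_specialLinearGroup_apply] at htransform
  rw [neg_one_zpow_mul_exp_eq_expPi_div hk hβ hκ hδ, mul_assoc, mul_comm (_ ^ 3) (Vhat11 τ)]
  simpa [g] using htransform
end

section
/- Let S := {h/k ∈ ℚ : h ∈ ℤ odd, k ∈ ℕ, k ≥ 1, gcd(h,k) = 1}, let S' := {h/k ∈ S : h ≡ 1 or 5 (mod 6)}, and let S_ev := {h/k ∈ S : k even}. Then: (a) for every x ∈ S': x + 6 ∈ S', x − 6 ∈ S', and, whenever the denominators are nonzero, x/(2x+1) ∈ S' and x/(1−2x) ∈ S'; (b) for every x ∈ S' ∪ S_ev: x + 6 ∈ S' ∪ S_ev, x − 6 ∈ S' ∪ S_ev, and, whenever the denominators are nonzero, x/(2x+1) ∈ S' ∪ S_ev and x/(1−2x) ∈ S' ∪ S_ev. (These are the closure properties of the quantum sets S₃₁ = S₆₁ = S' and S₅₁ = S' ∪ S_ev under the group ⟨(1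 0; 2 1), (1 6; 0 1)⟩.) -/
/-- The set `S` of rational numbers with odd numerator in lowest terms. -/
def Sodd : Set ℚ := {x | Odd x.num}

/-- `S' = {h/k ∈ S : h ≡ ±1 (mod 6)}`. -/
def Sprime : Set ℚ := {x | Odd x.num ∧ (x.num % 6 = 1 ∨ x.num % 6 = 5)}

/-- `S_ev = {h/k ∈ S : k even}`. -/
def Sev : Set ℚ := {x | Odd x.num ∧ Even x.den}

/-!
If `γ = (a b; c d)` has determinant `1` and `x = p / q` is in lowest terms, then so is
`γ x = (a p + b q) / (c p + d q)`, up to a common sign. Now `x ∈ S'` says that `p` is prime to `6`;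
when `6 ∣ b`, `a` is prime to `6`, hence so is `a p + b q`. Likewise `x ∈ S_ev` says that `q` is
even, which passes to `c p + d q` when `c` is even.
-/

open scoped MatrixGroups

open ModularGroup

theorem intCast_mul_add_intCast_mul_den (a b : ℤ) (x : ℚ) :
    (a * x + b) * x.den = ((a * x.num + b * x.den : ℤ) : ℚ) := by
  push_cast
  rw [← Rat.mul_den_eq_num x]
  ring

theorem mul_num_add_mul_den_ne_zero {a b : ℤ} {x : ℚ} (h : a * x + b ≠ 0) :
    a * x.num + b * x.den ≠ 0 := by
  rw [← Int.cast_ne_zero (α := ℚ), ← intCast_mul_add_intCast_mul_den]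
  exact mul_ne_zero h (mod_cast x.den_nz)

theorem den_intCast_div_intCast_of_isCoprime {a b : ℤ} (hb : b ≠ 0) (h : IsCoprime a b) :
    (a / b : ℚ).den = b.natAbs := by
  rw [← Rat.divInt_eq_div, Rat.den_divInt, if_neg hb, Int.isCoprime_iff_gcd_eq_one.mp h.symm,
    Nat.div_one]

theorem isCoprime_apply_zero_zero_of_dvd {R : Type*} [CommRing R] {γ : SL(2, R)} {r : R}
    (hr : r ∣ γ 0 1) : IsCoprime (γ 0 0) r := by
  have hdet : γ 0 0 * γ 1 1 - γ 0 1 * γ 1 0 = 1 := by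
    rw [← Matrix.det_fin_two, γ.det_coe]
  have hrow : IsCoprime (γ 0 0) (γ 0 1) := ⟨γ 1 1, -γ 1 0, by linear_combination hdet⟩
  exact hrow.of_isCoprime_of_dvd_right hr

section Moebius

variable {γ : SL(2, ℤ)} {x : ℚ} {N : ℤ}

/-- The fractional linear action of `SL(2, ℤ)` on `ℚ`. The point at infinity is not represented:
where the denominator vanishes the value is the junk value `0`. -/
def moebius (γ : SL(2, ℤ)) (x : ℚ) : ℚ :=
  (γ 0 0 * x + γ 0 1) / (γ 1 0 * x + γ 1 1)

theorem moebius_eq_intCast_div_intCast (γ : SL(2, ℤ)) (x : ℚ) :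
    moebius γ x = ((γ 0 0 * x.num + γ 0 1 * x.den : ℤ) : ℚ) /
      ((γ 1 0 * x.num + γ 1 1 * x.den : ℤ) : ℚ) := by
  have hden : (x.den : ℚ) ≠ 0 := mod_cast x.den_nz
  rw [moebius, ← mul_div_mul_right _ _ hden, intCast_mul_add_intCast_mul_den,
    intCast_mul_add_intCast_mul_den]

theorem num_moebius_dvd (h : γ 1 0 * x + γ 1 1 ≠ 0) :
    (moebius γ x).num ∣ γ 0 0 * x.num + γ 0 1 * x.den := by
  rw [moebius_eq_intCast_div_intCast, ← Rat.divInt_eq_div]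
  exact Rat.num_dvd _ (mul_num_add_mul_den_ne_zero h)

theorem den_moebius (h : γ 1 0 * x + γ 1 1 ≠ 0) :
    (moebius γ x).den = (γ 1 0 * x.num + γ 1 1 * x.den).natAbs := by
  have hcoprime : IsCoprime (γ 0 0 * x.num + γ 0 1 * x.den) (γ 1 0 * x.num + γ 1 1 * x.den) := by
    simpa [Matrix.mulVec, dotProduct] using
      IsCoprime.mulVecSL (v := ![x.num, (x.den : ℤ)]) x.isCoprime_num_den γ
  rw [moebius_eq_intCast_div_intCast,
    den_intCast_div_intCast_of_isCoprime (mul_num_add_mul_den_ne_zero h) hcoprime]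

theorem isCoprime_num_moebius (hN : N ∣ γ 0 1) (h : γ 1 0 * x + γ 1 1 ≠ 0)
    (hx : IsCoprime x.num N) : IsCoprime (moebius γ x).num N := by
  have hmul : IsCoprime (γ 0 0 * x.num) N := (isCoprime_apply_zero_zero_of_dvd hN).mul_left hx
  have hadd : IsCoprime (γ 0 0 * x.num + γ 0 1 * x.den) N := by
    obtain ⟨k, hk⟩ := hN
    rw [hk, mul_assoc]
    exact hmul.add_mul_left_left _
  exact hadd.of_isCoprime_of_dvd_left (num_moebius_dvd h)

theorem dvd_den_moebius (hN : N ∣ γ 1 0) (h : γ 1 0 * x + γ 1 1 ≠ 0) (hx : N ∣ x.den) :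
    N ∣ (moebius γ x).den := by
  rw [den_moebius h, Int.dvd_natAbs]
  exact dvd_add (hN.mul_right _) (hx.mul_left _)

end Moebius

/-- `A` is mapped into itself by the fractional linear action of every element of `Γ`, points sent
to infinity being disregarded. -/
def IsMoebiusStable (Γ : Set SL(2, ℤ)) (A : Set ℚ) : Prop :=
  ∀ γ ∈ Γ, ∀ x ∈ A, γ 1 0 * x + γ 1 1 ≠ 0 → moebius γ x ∈ A

namespace IsMoebiusStable

variable {Γ Δ : Set SL(2, ℤ)} {A B : Set ℚ} {n : ℤ} {x : ℚ}

theorem mono (hA : IsMoebiusStable Γ A) (h : Δ ⊆ Γ) : IsMoebiusStable Δ A :=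
  fun γ hγ => hA γ (h hγ)

theorem union (hA : IsMoebiusStable Γ A) (hB : IsMoebiusStable Γ B) :
    IsMoebiusStable Γ (A ∪ B) :=
  fun γ hγ x hx h => hx.imp (hA γ hγ x · h) (hB γ hγ x · h)

theorem add_intCast_mem (hA : IsMoebiusStable Γ A) (hn : T ^ n ∈ Γ) (hx : x ∈ A) :
    x + n ∈ A := by
  simpa [moebius, coe_T_zpow] using hA _ hn x hx

theorem div_intCast_mul_add_one_mem (hA : IsMoebiusStable Γ A) (hn : (T ^ n).transpose ∈ Γ)
    (hx : x ∈ A) (h : n * x + 1 ≠ 0) : x / (n * x + 1) ∈ A := by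
  simpa [moebius, coe_T_zpow, h] using hA _ hn x hx

theorem closed_under_generators (hA : IsMoebiusStable {γ | 6 ∣ γ 0 1 ∧ 2 ∣ γ 1 0} A) :
    ∀ x ∈ A, x + 6 ∈ A ∧ x - 6 ∈ A ∧
      (2 * x + 1 ≠ 0 → x / (2 * x + 1) ∈ A) ∧ (1 - 2 * x ≠ 0 → x / (1 - 2 * x) ∈ A) := by
  intro x hx
  have hadd {n : ℤ} (hn : 6 ∣ n) : x + n ∈ A :=
    hA.add_intCast_mem (by simpa [coe_T_zpow] using hn) hx
  have hdiv {n : ℤ} (hn : 2 ∣ n) : n * x + 1 ≠ 0 → x / (n * x + 1) ∈ A :=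
    hA.div_intCast_mul_add_one_mem (by simpa [coe_T_zpow] using hn) hx
  have hneg : ((-2 : ℤ) : ℚ) * x + 1 = 1 - 2 * x := by push_cast; ring
  refine ⟨mod_cast hadd (dvd_refl 6), ?_, mod_cast hdiv (dvd_refl 2), ?_⟩
  · simpa [sub_eq_add_neg] using hadd (n := -6) (by norm_num)
  · simpa only [hneg] using hdiv (n := -2) (by norm_num)

end IsMoebiusStable

theorem mem_Sprime_iff_isCoprime {x : ℚ} : x ∈ Sprime ↔ IsCoprime x.num 6 := by
  have hthree : IsCoprime x.num 3 ↔ ¬ 3 ∣ x.num := by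
    rw [isCoprime_comm, Int.prime_three.coprime_iff_not_dvd]
  rw [show (6 : ℤ) = 2 * 3 by norm_num, IsCoprime.mul_right_iff, Int.isCoprime_two_right, hthree,
    Sprime, Set.mem_ofPred_eq, Int.odd_iff]
  omega

theorem mem_Sev_iff_two_dvd_den {x : ℚ} : x ∈ Sev ↔ (2 : ℤ) ∣ x.den := by
  refine ⟨fun hx => mod_cast hx.2.two_dvd, fun hx => ⟨?_, even_iff_two_dvd.mpr (mod_cast hx)⟩⟩
  rw [← Int.isCoprime_two_right]
  exact x.isCoprime_num_den.of_isCoprime_of_dvd_right hx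

theorem isMoebiusStable_Sprime : IsMoebiusStable {γ | 6 ∣ γ 0 1} Sprime := by
  intro γ hγ x hx h
  rw [mem_Sprime_iff_isCoprime] at hx ⊢
  exact isCoprime_num_moebius hγ h hx

theorem isMoebiusStable_Sev : IsMoebiusStable {γ | 2 ∣ γ 1 0} Sev := by
  intro γ hγ x hx h
  rw [mem_Sev_iff_two_dvd_den] at hx ⊢
  exact dvd_den_moebius hγ h hx

/-- The matrices range over the congruence subgroups `Γ⁰(6)` and `Γ⁰(6) ∩ Γ₀(2)`. -/
theorem Sprime_Sev_closed_general :
    IsMoebiusStable {γ | 6 ∣ γ 0 1} Sprime ∧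
      IsMoebiusStable {γ | 6 ∣ γ 0 1 ∧ 2 ∣ γ 1 0} (Sprime ∪ Sev) :=
  ⟨isMoebiusStable_Sprime,
    (isMoebiusStable_Sprime.mono fun _ => And.left).union
      (isMoebiusStable_Sev.mono fun _ => And.right)⟩

/-- Closure of the quantum sets `S₃₁ = S₆₁ = S'` and `S₅₁ = S' ∪ S_ev` under the
generators (and inverses) of `⟨(1 0; 2 1), (1 6; 0 1)⟩`. -/
theorem Sprime_Sev_closed :
    (∀ x ∈ Sprime,
      x + 6 ∈ Sprime ∧ x - 6 ∈ Sprime ∧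
      (2 * x + 1 ≠ 0 → x / (2 * x + 1) ∈ Sprime) ∧
      (1 - 2 * x ≠ 0 → x / (1 - 2 * x) ∈ Sprime)) ∧
    (∀ x ∈ Sprime ∪ Sev,
      x + 6 ∈ Sprime ∪ Sev ∧ x - 6 ∈ Sprime ∪ Sev ∧
      (2 * x + 1 ≠ 0 → x / (2 * x + 1) ∈ Sprime ∪ Sev) ∧
      (1 - 2 * x ≠ 0 → x / (1 - 2 * x) ∈ Sprime ∪ Sev)) :=
  ⟨(Sprime_Sev_closed_general.1.mono fun _ => And.left).closed_under_generators,
    Sprime_Sev_closed_general.2.closed_under_generators⟩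
end

section
/- Let h ∈ ℤ be odd and k ∈ ℕ with k ≥ 1 and gcd(h,k) = 1. (a) If h ≡ 1 or 5 (mod 6), then there exist no integers j and r satisfying 2h(3j+1) = 3k(4r−1), and no integers j and r satisfying 2h(3j+2) = 3k(4r+1). (b) If h ≡ 3 (mod 6) and k is even, then there exist integers j and r with 0 ≤ j < k such that 2h(3j+1) = 3k(4r−1) or 2h(3j+2) = 3k(4r+1). (This is the arithmetic content of Lemma 4.2 for m = 3: the series g₂(i·e^{πih/(3k)}; e^{πih/k}) terminates without a vanishing denominator exactly on the set S₃₁.) -/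
/-!
Both equations equate `2 * h` times a non-multiple of `3` with a multiple of `3`, which forces
`3 ∣ h`. Conversely, write `h = 3 * a` and `k = 2 * b`: it suffices to find `0 < c < 6` for which
`b * c` and `a * c` have the residues modulo `3` and `4` prescribed by one of the equations, since
then `a * (b * c) = b * (a * c)` is that equation, and `c < 6` gives `j < k`.
-/

theorem three_dvd_of_two_mul_mul_eq {h k x y : ℤ} (hx : ¬3 ∣ x)
    (heq : 2 * h * x = 3 * k * y) : 3 ∣ h := by
  have hdvd : 3 ∣ 2 * h * x := ⟨k * y, by rw [heq, mul_assoc]⟩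
  have h_two_mul : 3 ∣ 2 * h := (Int.prime_three.dvd_or_dvd hdvd).resolve_right hx
  omega

theorem not_dvd_of_isCoprime_of_dvd {R : Type*} [CommSemiring R] {p x y : R} (hp : Prime p)
    (hcop : IsCoprime x y) (hx : p ∣ x) : ¬p ∣ y :=
  fun hy => hp.not_isUnit (hcop.isUnit_of_dvd' hx hy)

theorem exists_mul_emod_three_and_mul_emod_four {a b : ℤ} (ha : Odd a) (hb : ¬3 ∣ b) :
    ∃ c : ℤ, 0 < c ∧ c < 6 ∧
      (b * c % 3 = 1 ∧ a * c % 4 = 3 ∨ b * c % 3 = 2 ∧ a * c % 4 = 1) := by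
  have ha_mod : a % 4 = 1 ∨ a % 4 = 3 := by grind
  -- As `5 ≡ -1 [ZMOD 3]` and `5 ≡ 1 [ZMOD 4]`, the choice `c = 5` changes only the residue of `b`.
  by_cases hmatch : b % 3 = 1 ↔ a % 4 = 3
  · exact ⟨1, by omega⟩
  · exact ⟨5, by omega⟩

theorem exists_mul_three_mul_add_eq_mul_four_mul {a b : ℤ} (ha : Odd a) (hb_pos : 0 < b)
    (hb : ¬3 ∣ b) :
    ∃ j r : ℤ, 0 ≤ j ∧ j < 2 * b ∧
      (a * (3 * j + 1) = b * (4 * r - 1) ∨ a * (3 * j + 2) = b * (4 * r + 1)) := by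
  obtain ⟨c, hc_pos, hc_lt, hres⟩ := exists_mul_emod_three_and_mul_emod_four ha hb
  have hbc_pos : 0 < b * c := mul_pos hb_pos hc_pos
  have hbc_lt : b * c < b * 6 := mul_lt_mul_of_pos_left hc_lt hb_pos
  have hcomm : a * (b * c) = b * (a * c) := mul_left_comm a b c
  rcases hres with ⟨hb_res, ha_res⟩ | ⟨hb_res, ha_res⟩
  · have hj : b * c = 3 * (b * c / 3) + 1 := by omega
    have hr : a * c = 4 * (a * c / 4 + 1) - 1 := by omega
    exact ⟨b * c / 3, a * c / 4 + 1, by omega, by omega, Or.inl (by rwa [← hj, ← hr])⟩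
  · have hj : b * c = 3 * (b * c / 3) + 2 := by omega
    have hr : a * c = 4 * (a * c / 4) + 1 := by omega
    exact ⟨b * c / 3, a * c / 4, by omega, by omega, Or.inr (by rwa [← hj, ← hr])⟩

theorem g2_termination_m3_general (h k : ℤ) :
    (¬3 ∣ h →
      (¬∃ j r : ℤ, 2 * h * (3 * j + 1) = 3 * k * (4 * r - 1)) ∧
      (¬∃ j r : ℤ, 2 * h * (3 * j + 2) = 3 * k * (4 * r + 1))) ∧
    (Odd h → 3 ∣ h → 0 < k → Even k → ¬3 ∣ k →
      ∃ j r : ℤ, 0 ≤ j ∧ j < k ∧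
        (2 * h * (3 * j + 1) = 3 * k * (4 * r - 1) ∨
          2 * h * (3 * j + 2) = 3 * k * (4 * r + 1))) := by
  refine ⟨fun h3 => ⟨?_, ?_⟩, ?_⟩
  · rintro ⟨j, r, heq⟩
    exact h3 (three_dvd_of_two_mul_mul_eq (by omega) heq)
  · rintro ⟨j, r, heq⟩
    exact h3 (three_dvd_of_two_mul_mul_eq (by omega) heq)
  · rintro hodd ⟨a, rfl⟩ hk_pos hk_even hk3
    obtain ⟨b, rfl⟩ := even_iff_two_dvd.mp hk_even
    obtain ⟨j, r, hj_nonneg, hj_lt, heq⟩ := exists_mul_three_mul_add_eq_mul_four_mul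
      (Int.odd_mul.mp hodd).2 (by omega : 0 < b) (by omega)
    refine ⟨j, r, hj_nonneg, hj_lt, heq.imp (fun heq => ?_) (fun heq => ?_)⟩
    · linear_combination 6 * heq
    · linear_combination 6 * heq

/-- The arithmetic content of Lemma 4.2 for `m = 3`: termination without vanishing
denominators of `g₂(i e^{πih/(3k)}; e^{πih/k})` happens exactly on `S₃₁`. -/
theorem g2_termination_m3 (h : ℤ) (k : ℕ) (hk : 1 ≤ k)
    (hodd : Odd h) (hcop : Int.gcd h (k : ℤ) = 1) :
    ((h % 6 = 1 ∨ h % 6 = 5) →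
      (¬∃ j r : ℤ, 2 * h * (3 * j + 1) = 3 * (k : ℤ) * (4 * r - 1)) ∧
      (¬∃ j r : ℤ, 2 * h * (3 * j + 2) = 3 * (k : ℤ) * (4 * r + 1))) ∧
    ((h % 6 = 3 ∧ Even k) →
      ∃ j r : ℤ, 0 ≤ j ∧ j < (k : ℤ) ∧
        (2 * h * (3 * j + 1) = 3 * (k : ℤ) * (4 * r - 1) ∨
          2 * h * (3 * j + 2) = 3 * (k : ℤ) * (4 * r + 1))) := by
  obtain ⟨hnone, hsome⟩ := g2_termination_m3_general h k
  have hk3 (h3 : 3 ∣ h) : ¬3 ∣ (k : ℤ) :=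
    not_dvd_of_isCoprime_of_dvd Int.prime_three (Int.isCoprime_iff_gcd_eq_one.mpr hcop) h3
  exact ⟨fun _ => hnone (by omega), fun ⟨_, hk_even⟩ =>
    hsome hodd (by omega) (by omega) (mod_cast hk_even) (hk3 (by omega))⟩
end

section
/- Let h ∈ ℤ be odd and k ∈ ℕ with k ≥ 1 and gcd(h,k) = 1. (a) If h ≡ 1 or 5 (mod 6), then there exist no integers n and r satisfying h(3n+1) = 3k(2r+1), and no integers n and r satisfying h(3n+2) = 3k(2r+1). (b) If h ≡ 3 (mod 6) and k is odd, then there exist integers n and r with 0 ≤ n < k such that h(3n+1) = 3k(2r+1) or h(3n+2) = 3k(2r+1). (This is the arithmetic content of Lemma 4.3 for m = 3: the denominator factors 1 + e(h(3n+1)/(3k)) and 1 + e(h(3n+2)/(3k)) of f₃(h/k) are nonzero exactly when h/k lies in S₃₁.) -/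
/-!
If `d` is coprime to `h`, then `h(dn + c)` is divisible by `d` only when `c` is, so it is never a
multiple `dk(2r + 1)` for a nonzero residue `c`. If instead `d ∣ h`, Euclidean division of `k` by
`d` gives a solution: for `k = dn + c` both sides are `hk` once the odd quotient `h / d` is written
as `2r + 1`, and `c ≠ 0` because a common factor `d` of `h` and `k` is excluded.
-/

theorem not_dvd_mul_mul_add_of_isCoprime {R : Type*} [CommRing R] {d h c : R}
    (hdh : IsCoprime d h) (hc : ¬d ∣ c) (n : R) : ¬d ∣ h * (d * n + c) := fun hdvd =>
  hc <| (dvd_add_right (dvd_mul_right d n)).mp (hdh.dvd_of_dvd_mul_left hdvd)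

theorem not_exists_mul_mul_add_eq_of_isCoprime {R : Type*} [CommRing R] {d h c : R}
    (hdh : IsCoprime d h) (hc : ¬d ∣ c) (k : R) :
    ¬∃ n r : R, h * (d * n + c) = d * k * (2 * r + 1) := by
  rintro ⟨n, r, heq⟩
  refine not_dvd_mul_mul_add_of_isCoprime hdh hc n ?_
  rw [heq, mul_assoc]
  exact dvd_mul_right d _

theorem exists_eq_mul_two_mul_add_one_of_odd_of_dvd {d h : ℤ} (hodd : Odd h) (hdh : d ∣ h) :
    ∃ r : ℤ, h = d * (2 * r + 1) := by
  obtain ⟨q, rfl⟩ := hdh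
  obtain ⟨r, rfl⟩ := (Int.odd_mul.mp hodd).2
  exact ⟨r, rfl⟩

theorem exists_mul_mul_add_eq_of_odd_of_dvd {d h : ℤ} {k : ℕ} (hd : 1 < d) (hodd : Odd h)
    (hcop : IsCoprime h (k : ℤ)) (hdh : d ∣ h) :
    ∃ c n r : ℤ, 0 < c ∧ c < d ∧ 0 ≤ n ∧ n < k ∧ h * (d * n + c) = d * k * (2 * r + 1) := by
  obtain ⟨r, hr⟩ := exists_eq_mul_two_mul_add_one_of_odd_of_dvd hodd hdh
  have hd_pos : 0 < d := by lia
  have hd_unit : ¬IsUnit d := by rw [Int.isUnit_iff]; lia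
  have hdk : ¬d ∣ (k : ℤ) := fun hdvd => hd_unit (hcop.isUnit_of_dvd' hdh hdvd)
  have hk_pos : 0 < (k : ℤ) := (Int.natCast_nonneg k).lt_of_ne' fun hk => hdk (hk ▸ dvd_zero d)
  refine ⟨k % d, k / d, r, (Int.emod_pos_of_not_dvd hdk).resolve_left hd_pos.ne',
    Int.emod_lt_of_pos _ hd_pos, Int.ediv_nonneg hk_pos.le hd_pos.le,
    Int.ediv_lt_self_of_pos_of_ne_one hk_pos hd.ne', ?_⟩
  calc h * (d * (k / d) + k % d) = h * k := by rw [Int.mul_ediv_add_emod]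
    _ = d * k * (2 * r + 1) := by rw [hr]; ring

theorem f3_nonvanishing_m3_general (h : ℤ) (k : ℕ) (hodd : Odd h)
    (hcop : Int.gcd h (k : ℤ) = 1) :
    (¬3 ∣ h →
      (¬∃ n r : ℤ, h * (3 * n + 1) = 3 * (k : ℤ) * (2 * r + 1)) ∧
      (¬∃ n r : ℤ, h * (3 * n + 2) = 3 * (k : ℤ) * (2 * r + 1))) ∧
    (3 ∣ h →
      ∃ n r : ℤ, 0 ≤ n ∧ n < (k : ℤ) ∧
        (h * (3 * n + 1) = 3 * (k : ℤ) * (2 * r + 1) ∨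
          h * (3 * n + 2) = 3 * (k : ℤ) * (2 * r + 1))) := by
  refine ⟨fun h3 => ?_, fun h3 => ?_⟩
  · have hcop3 : IsCoprime 3 h := Int.prime_three.coprime_iff_not_dvd.mpr h3
    exact ⟨not_exists_mul_mul_add_eq_of_isCoprime hcop3 (by norm_num) _,
      not_exists_mul_mul_add_eq_of_isCoprime hcop3 (by norm_num) _⟩
  · obtain ⟨c, n, r, hc_pos, hc_lt, hn_nonneg, hn_lt, heq⟩ :=
      exists_mul_mul_add_eq_of_odd_of_dvd (by norm_num) hodd
        (Int.isCoprime_iff_gcd_eq_one.mpr hcop) h3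
    obtain rfl | rfl : c = 1 ∨ c = 2 := by lia
    · exact ⟨n, r, hn_nonneg, hn_lt, .inl heq⟩
    · exact ⟨n, r, hn_nonneg, hn_lt, .inr heq⟩

/-- The arithmetic content of Lemma 4.3 for `m = 3`: the denominator factors
`1 + e(h(3n+1)/(3k))` and `1 + e(h(3n+2)/(3k))` of `f₃(h/k)` are nonzero exactly
when `h/k ∈ S₃₁`. -/
theorem f3_nonvanishing_m3 (h : ℤ) (k : ℕ) (hk : 1 ≤ k)
    (hodd : Odd h) (hcop : Int.gcd h (k : ℤ) = 1) :
    ((h % 6 = 1 ∨ h % 6 = 5) →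
      (¬∃ n r : ℤ, h * (3 * n + 1) = 3 * (k : ℤ) * (2 * r + 1)) ∧
      (¬∃ n r : ℤ, h * (3 * n + 2) = 3 * (k : ℤ) * (2 * r + 1))) ∧
    ((h % 6 = 3 ∧ Odd k) →
      ∃ n r : ℤ, 0 ≤ n ∧ n < (k : ℤ) ∧
        (h * (3 * n + 1) = 3 * (k : ℤ) * (2 * r + 1) ∨
          h * (3 * n + 2) = 3 * (k : ℤ) * (2 * r + 1))) := by
  obtain ⟨hnone, hexists⟩ := f3_nonvanishing_m3_general h k hodd hcop
  exact ⟨fun hmod => hnone (by lia), fun hmod => hexists (by lia)⟩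
end
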